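/- arXiv:math/0612775 — 5 statements merged into one kernel-verified Lean document; each statement's English description precedes it below -/
import Mathlib

section
/- Let f ∈ L¹(ℝ) with Fourier transform f̃(λ) = ∫_ℝ f(t) e^{-iλt} dt. If ∫_ℝ ∫_ℝ |f(x)| |f̃(y)| e^{|xy|} dx dy < ∞, then f = 0 almost everywhere. -/
open MeasureTheory

lemma beu_diff_integral {μ : Measure ℝ} (K : ℂ → ℝ → ℂ)
    (hm : ∀ z, AEStronglyMeasurable (K z) μ)
    (hd : ∀ y, Differentiable ℂ (fun z => K z y))
    (hb : ∀ R : ℝ, ∃ b : ℝ → ℝ, Integrable b μ ∧ ∀ᵐ y ∂μ, ∀ z, ‖z‖ ≤ R → ‖K z y‖ ≤ b y) :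
    Differentiable ℂ (fun z => ∫ y, K z y ∂μ) := by
  intro z₀
  obtain ⟨b, hbi, hb⟩ := hb (‖z₀‖ + 2)
  refine (hasDerivAt_integral_of_dominated_loc_of_deriv_le (F := K)
    (F' := fun z y => deriv (fun z => K z y) z) (bound := b) (s := Metric.ball z₀ 1)
    (Metric.ball_mem_nhds _ one_pos) (Filter.Eventually.of_forall hm) ?_ ?_ ?_ hbi ?_).2.differentiableAt
  · refine hbi.mono' (hm z₀) ?_
    filter_upwards [hb] with y hy
    exact hy _ (by linarith)
  · refine aestronglyMeasurable_of_tendsto_ae Filter.atTop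
      (f := fun (n : ℕ) y => ((n : ℂ) + 1) * (K (z₀ + 1 / ((n : ℂ) + 1)) y - K z₀ y)) ?_ ?_
    · intro n
      exact ((hm _).sub (hm _)).const_mul _
    · refine Filter.Eventually.of_forall fun y => ?_
      have h1 := ((hd y) z₀).hasDerivAt
      rw [hasDerivAt_iff_tendsto_slope_zero] at h1
      have h2 : Filter.Tendsto (fun n : ℕ => 1 / ((n : ℂ) + 1)) Filter.atTop (nhdsWithin 0 {0}ᶜ) := by
        rw [tendsto_nhdsWithin_iff]
        refine ⟨tendsto_one_div_add_atTop_nhds_zero_nat, Filter.Eventually.of_forall fun n => ?_⟩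
        have : (n : ℂ) + 1 ≠ 0 := by exact_mod_cast Nat.succ_ne_zero n
        simpa using this
      have h3 := h1.comp h2
      refine h3.congr fun n => ?_
      simp
  · filter_upwards [hb] with y hy z hz
    have := Complex.norm_deriv_le_of_forall_mem_sphere_norm_le (c := z) (R := 1) (C := b y)
      one_pos ((hd y).diffContOnCl) ?_
    · simpa using this
    · intro w hw
      apply hy
      have e1 : ‖w - z‖ = 1 := by simpa using hw
      have e2 : ‖z - z₀‖ < 1 := by simpa [dist_eq_norm] using hz
      calc ‖w‖ = ‖z₀ + (z - z₀) + (w - z)‖ := by congr 1; ring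
        _ ≤ ‖z₀‖ + ‖z - z₀‖ + ‖w - z‖ := norm_add₃_le
        _ ≤ _ := by linarith
  · exact Filter.Eventually.of_forall fun y z _ => ((hd y) z).hasDerivAt

open FourierTransform SchwartzMap in
lemma beu_ft_inj (u : ℝ → ℂ) (hu : Integrable u)
    (h0 : ∀ x : ℝ, ∫ t : ℝ, u t * Complex.exp (-(Complex.I * x * t)) = 0) :
    ∀ᵐ x, u x = 0 := by
  have hz : ∀ w : ℝ, 𝓕 u w = 0 := by
    intro w
    rw [Real.fourier_real_eq_integral_exp_smul, ← h0 (2 * Real.pi * w)]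
    congr 1
    ext t
    rw [smul_eq_mul, mul_comm]
    congr 2
    push_cast
    ring
  apply ae_eq_zero_of_integral_contDiff_smul_eq_zero hu.locallyIntegrable
  intro g g_smooth g_cpt
  have hg₁ : HasCompactSupport (Complex.ofRealCLM ∘ g) := g_cpt.comp_left rfl
  have hg₂ : ContDiff ℝ ((⊤ : ℕ∞) : WithTop ℕ∞) (Complex.ofRealCLM ∘ g) := by fun_prop
  let φ : 𝓢(ℝ, ℂ) := hg₁.toSchwartzMap hg₂
  let ψ : 𝓢(ℝ, ℂ) := 𝓕⁻ φ
  have e : 𝓕 (ψ : ℝ → ℂ) = φ := by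
    rw [← SchwartzMap.fourier_coe]
    simp [ψ]
  have key := VectorFourier.integral_fourierIntegral_smul_eq_flip (μ := volume) (ν := volume)
    (L := innerₗ ℝ) (f := u) (g := (ψ : ℝ → ℂ)) Real.continuous_fourierChar continuous_inner hu ψ.integrable
  have e1 : ∀ w, VectorFourier.fourierIntegral Real.fourierChar volume (innerₗ ℝ) u w = 0 := hz
  have e2 : ∀ w, VectorFourier.fourierIntegral Real.fourierChar volume (innerₗ ℝ).flip (ψ : ℝ → ℂ) w = g w := by
    intro w
    rw [flip_innerₗ]
    exact congrFun e w
  simp only [e1, e2, zero_smul, integral_zero] at key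
  rw [key]
  congr 1
  ext x
  simp [mul_comm]

lemma beu_ray (P : ℝ → ℝ) (hP : Continuous P) (N : ℝ → ℝ) (hN : Monotone N) (K : ℝ)
    (hK : ∀ T : ℝ, 0 ≤ T → ∫ s in (0:ℝ)..T, P s * N s ≤ K) (ψ : ℝ → ℂ) (T : ℝ) (hT : 0 ≤ T)
    (h : ∀ t : ℝ, 0 < t → t ≤ 1 → ‖ψ t‖ ≤ P (t * T) * N (t * T)) :
    T * ‖∫ t in (0:ℝ)..1, ψ t‖ ≤ K := by
  have h1 : ‖∫ t in (0:ℝ)..1, ψ t‖ ≤ ∫ t in (0:ℝ)..1, P (t * T) * N (t * T) := by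
    apply intervalIntegral.norm_integral_le_of_norm_le zero_le_one
    · exact Filter.Eventually.of_forall fun t ht => h t ht.1 ht.2
    · apply IntervalIntegrable.continuousOn_mul
      · apply Monotone.intervalIntegrable
        intro a b hab
        exact hN (by gcongr)
      · fun_prop
  calc _ ≤ T * ∫ t in (0:ℝ)..1, P (t * T) * N (t * T) := by gcongr
    _ = ∫ s in (0:ℝ)..T, P s * N s := by
      have := intervalIntegral.mul_integral_comp_mul_right (a := 0) (b := 1) (c := T) (f := fun s => P s * N s)
      simpa using this
    _ ≤ K := hK T hT

lemma beu_Gdiff (φ : ℂ → ℂ) (hφ : Differentiable ℂ φ) :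
    Differentiable ℂ (fun z : ℂ => z * ∫ t in (0:ℝ)..1, φ (t * z)) := by
  apply Differentiable.mul differentiable_id
  simp only [intervalIntegral.integral_of_le (zero_le_one : (0:ℝ) ≤ 1)]
  apply beu_diff_integral (fun z t => φ (t * z))
  · intro z
    have : Continuous fun t : ℝ => φ (t * z) := hφ.continuous.comp (by fun_prop)
    exact this.aestronglyMeasurable
  · intro y
    exact hφ.comp (by fun_prop)
  · intro R
    obtain ⟨C, hC⟩ := (isCompact_closedBall (0:ℂ) R).exists_bound_of_continuousOn
      hφ.continuous.continuousOn
    refine ⟨fun _ => C, integrable_const _, ?_⟩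
    rw [ae_restrict_iff' measurableSet_Ioc]
    refine Filter.Eventually.of_forall fun t ht z hz => hC _ ?_
    have h1 : ‖(t : ℂ) * z‖ ≤ 1 * ‖z‖ := by
      rw [norm_mul, Complex.norm_real, Real.norm_of_nonneg ht.1.le]
      gcongr
      exact ht.2
    simpa using (h1.trans (by simpa using hz))

lemma beu_quad_alpha (P Q : ℂ → ℂ) (hP : Differentiable ℂ P) (hQ : Differentiable ℂ Q)
    (N : ℝ → ℝ) (hN : Monotone N) (hPN : ∀ z, ‖P z‖ ≤ N ‖z‖) (hQN : ∀ z, ‖Q z‖ ≤ N ‖z‖)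
    (C : ℝ) (hC : ∀ r, N r ≤ C * Real.exp (r ^ 2)) (K : ℝ)
    (hPK : ∀ T : ℝ, 0 ≤ T → ∫ s in (0:ℝ)..T, ‖P s‖ * N s ≤ K)
    (hQK : ∀ T : ℝ, 0 ≤ T → ∫ s in (0:ℝ)..T, ‖Q (-s)‖ * N s ≤ K)
    (α : ℝ) (hα : 0 < α) (z : ℂ) (hz : z ≠ 0) (h1 : α < z.arg) (h2 : z.arg ≤ Real.pi / 2) :
    ‖z * ∫ t in (0:ℝ)..1, P (Complex.exp (-(α * Complex.I)) * (t * z)) * Q (Complex.I * (t * z))‖ ≤ K := by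
  set e : ℂ := Complex.exp (-(α * Complex.I)) with he
  have hen : ‖e‖ = 1 := by rw [he, Complex.norm_exp]; simp
  have hN0 : ∀ r, 0 ≤ r → 0 ≤ N r := fun r hr => by
    have := (norm_nonneg _).trans (hPN r)
    simpa [abs_of_nonneg hr] using this
  have htn : ∀ t : ℝ, 0 < t → ∀ z : ℂ, ‖(t : ℂ) * z‖ = t * ‖z‖ := fun t ht z => by
    rw [norm_mul, Complex.norm_real, Real.norm_of_nonneg ht.le]
  set G : ℂ → ℂ := fun z => z * ∫ t in (0:ℝ)..1, P (e * (t * z)) * Q (Complex.I * (t * z)) with hG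
  have hGd : Differentiable ℂ G := by
    apply beu_Gdiff (fun z => P (e * z) * Q (Complex.I * z))
    exact (hP.comp (by fun_prop)).mul (hQ.comp (by fun_prop))
  have hGb : ∀ z, ‖G z‖ ≤ C ^ 2 * Real.exp (3 * ‖z‖ ^ 2) := by
    intro z
    have hb : ‖∫ t in (0:ℝ)..1, P (e * (t * z)) * Q (Complex.I * (t * z))‖ ≤ N ‖z‖ * N ‖z‖ * |1 - 0| := by
      apply intervalIntegral.norm_integral_le_of_norm_le_const
      intro t ht
      rw [Set.uIoc_of_le zero_le_one] at ht
      have hle : ‖(t : ℂ) * z‖ ≤ ‖z‖ := by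
        rw [htn t ht.1]
        exact mul_le_of_le_one_left (norm_nonneg _) ht.2
      rw [norm_mul]
      gcongr
      · exact hN0 _ (norm_nonneg _)
      · refine (hPN _).trans (hN ?_)
        rwa [norm_mul, hen, one_mul]
      · refine (hQN _).trans (hN ?_)
        rwa [norm_mul, Complex.norm_I, one_mul]
    have h3 : N ‖z‖ * N ‖z‖ ≤ (C * Real.exp (‖z‖ ^ 2)) * (C * Real.exp (‖z‖ ^ 2)) := by
      have := hN0 ‖z‖ (norm_nonneg _)
      have h5 := hC ‖z‖
      gcongr
      exact this.trans h5
    have h4 : ‖z‖ ≤ Real.exp (‖z‖ ^ 2) := by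
      have := Real.add_one_le_exp (‖z‖ ^ 2)
      nlinarith [sq_nonneg (‖z‖ - 1)]
    calc ‖G z‖ = ‖z‖ * ‖∫ t in (0:ℝ)..1, P (e * (t * z)) * Q (Complex.I * (t * z))‖ := norm_mul _ _
      _ ≤ Real.exp (‖z‖ ^ 2) * ((C * Real.exp (‖z‖ ^ 2)) * (C * Real.exp (‖z‖ ^ 2))) := by
        gcongr
        refine hb.trans ?_
        simpa using h3
      _ = C ^ 2 * Real.exp (3 * ‖z‖ ^ 2) := by
        rw [show 3 * ‖z‖ ^ 2 = ‖z‖ ^ 2 + ‖z‖ ^ 2 + ‖z‖ ^ 2 by ring, Real.exp_add, Real.exp_add]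
        ring
  have hnexp : ∀ w : ℂ, ‖Complex.exp w‖ = Real.exp w.re := Complex.norm_exp
  have main : ‖(G ∘ Complex.exp) (Complex.log z)‖ ≤ K := by
    refine PhragmenLindelof.horizontal_strip (a := α) (b := Real.pi / 2) ?_ ?_ ?_ ?_ ?_ ?_
    · exact (hGd.comp Complex.differentiable_exp).diffContOnCl
    · have hlt : α < Real.pi / 2 := h1.trans_le h2
      · refine ⟨2, ?_, 3, ?_⟩
        · rw [lt_div_iff₀ (by linarith)]
          linarith
        · refine Asymptotics.IsBigO.of_bound (C ^ 2) (Filter.Eventually.of_forall fun w => ?_)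
          refine (hGb _).trans ?_
          rw [Real.norm_of_nonneg (Real.exp_pos _).le, hnexp]
          have : Real.exp w.re ^ 2 ≤ Real.exp (2 * |w.re|) := by
            rw [← Real.exp_nat_mul]
            apply Real.exp_le_exp.2
            push_cast
            linarith [le_abs_self w.re]
          gcongr
    · intro w hw
      have hexp : e * Complex.exp w = (Real.exp w.re : ℝ) := by
        rw [he, ← Complex.exp_add, Complex.ofReal_exp]
        congr 1
        apply Complex.ext <;> simp [hw]
      have := beu_ray (fun s => ‖P s‖) ((hP.continuous.comp Complex.continuous_ofReal).norm) N hN K hPK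
        (fun t => P (e * (t * Complex.exp w)) * Q (Complex.I * (t * Complex.exp w)))
        (Real.exp w.re) (Real.exp_pos _).le ?_
      · simpa [hG, hnexp] using this
      · intro t ht0 ht1
        rw [norm_mul]
        have e1 : e * (t * Complex.exp w) = ((t * Real.exp w.re : ℝ) : ℂ) := by
          rw [mul_left_comm, hexp]; push_cast; rfl
        rw [e1]
        gcongr
        refine (hQN _).trans (le_of_eq ?_)
        rw [norm_mul, htn t ht0, hnexp, Complex.norm_I, one_mul]
    · intro w hw
      have hexp : Complex.I * Complex.exp w = -(Real.exp w.re : ℝ) := by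
        have : Complex.exp w = Complex.exp (w.re : ℂ) * Complex.exp (Real.pi / 2 * Complex.I) := by
          rw [← Complex.exp_add]
          congr 1
          apply Complex.ext <;> simp [hw]
        rw [this, Complex.exp_pi_div_two_mul_I, Complex.ofReal_exp]
        linear_combination Complex.exp (w.re : ℂ) * Complex.I_mul_I
      have := beu_ray (fun s => ‖Q (-s)‖)
        ((hQ.continuous.comp (by fun_prop)).norm) N hN K hQK
        (fun t => P (e * (t * Complex.exp w)) * Q (Complex.I * (t * Complex.exp w)))
        (Real.exp w.re) (Real.exp_pos _).le ?_
      · simpa [hG, hnexp] using this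
      · intro t ht0 ht1
        rw [norm_mul, mul_comm]
        have e1 : Complex.I * (t * Complex.exp w) = -((t * Real.exp w.re : ℝ) : ℂ) := by
          rw [mul_left_comm, hexp]; push_cast; ring
        rw [e1]
        gcongr
        refine (hPN _).trans (le_of_eq ?_)
        rw [norm_mul, hen, htn t ht0, hnexp, one_mul]
    · simpa [Complex.log_im] using h1.le
    · simpa [Complex.log_im] using h2
  simpa [Complex.exp_log hz, hG] using main

lemma beu_quad (P Q : ℂ → ℂ) (hP : Differentiable ℂ P) (hQ : Differentiable ℂ Q)
    (N : ℝ → ℝ) (hN : Monotone N) (hPN : ∀ z, ‖P z‖ ≤ N ‖z‖) (hQN : ∀ z, ‖Q z‖ ≤ N ‖z‖)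
    (C : ℝ) (hC : ∀ r, N r ≤ C * Real.exp (r ^ 2)) (K : ℝ)
    (hPK : ∀ T : ℝ, 0 ≤ T → ∫ s in (0:ℝ)..T, ‖P s‖ * N s ≤ K)
    (hQK : ∀ T : ℝ, 0 ≤ T → ∫ s in (0:ℝ)..T, ‖Q (-s)‖ * N s ≤ K)
    (z : ℂ) (h1 : 0 < z.re) (h2 : 0 < z.im) :
    ‖z * ∫ t in (0:ℝ)..1, P (t * z) * Q (Complex.I * (t * z))‖ ≤ K := by
  have hz : z ≠ 0 := fun h => by simp [h] at h1
  have ha1 : z.arg < Real.pi / 2 := (abs_lt.1 (Complex.abs_arg_lt_pi_div_two_iff.2 (Or.inl h1))).2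
  have ha0 : 0 < z.arg := by
    rcases (Complex.arg_nonneg_iff.2 h2.le).lt_or_eq with h | h
    · exact h
    · have := (Complex.arg_eq_zero_iff.1 h.symm).2
      linarith
  have hcP := hP.continuous
  have hcQ := hQ.continuous
  have hc : Continuous fun α : ℝ => ‖z * ∫ t in (0:ℝ)..1,
      P (Complex.exp (-(α * Complex.I)) * (t * z)) * Q (Complex.I * (t * z))‖ := by
    apply Continuous.norm
    apply Continuous.mul continuous_const
    apply intervalIntegral.continuous_parametric_intervalIntegral_of_continuous'
    unfold Function.uncurry
    fun_prop
  have ht := (hc.tendsto 0).mono_left (nhdsWithin_le_nhds (s := Set.Ioi 0))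
  have hfin := le_of_tendsto (b := K) ht (by
    filter_upwards [Ioo_mem_nhdsGT ha0] with α hα
    exact beu_quad_alpha P Q hP hQ N hN hPN hQN C hC K hPK hQK α hα.1 z hz hα.2 ha1.le)
  simpa using hfin

lemma beu_liouville (H : ℂ → ℂ) (hH : Differentiable ℂ H)
    (N : ℝ → ℝ) (hN : Monotone N) (hHN : ∀ z, ‖H z‖ ≤ N ‖z‖)
    (C : ℝ) (hC : ∀ r, N r ≤ C * Real.exp (r ^ 2)) (K : ℝ)
    (hK1 : ∀ T : ℝ, 0 ≤ T → ∫ s in (0:ℝ)..T, ‖H s‖ * N s ≤ K)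
    (hK2 : ∀ T : ℝ, 0 ≤ T → ∫ s in (0:ℝ)..T, ‖H (-s)‖ * N s ≤ K) (z : ℂ) : H z = 0 := by
  set φ : ℂ → ℂ := fun z => H z * H (Complex.I * z) with hφ
  have hφd : Differentiable ℂ φ := hH.mul (hH.comp (by fun_prop))
  set G : ℂ → ℂ := fun z => z * ∫ t in (0:ℝ)..1, φ (t * z) with hG
  have hGd : Differentiable ℂ G := beu_Gdiff φ hφd
  set M : ℂ → ℂ := fun z => H (-z) with hM
  have hMd : Differentiable ℂ M := hH.comp (by fun_prop)
  have hMN : ∀ z, ‖M z‖ ≤ N ‖z‖ := fun z => by simpa using hHN (-z)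
  have hM1 : ∀ T : ℝ, 0 ≤ T → ∫ s in (0:ℝ)..T, ‖M s‖ * N s ≤ K := hK2
  have hM2 : ∀ T : ℝ, 0 ≤ T → ∫ s in (0:ℝ)..T, ‖M (-s)‖ * N s ≤ K := by simpa [hM] using hK1
  have hb0 : ∀ z : ℂ, z.re ≠ 0 → z.im ≠ 0 → ‖G z‖ ≤ K := by
    intro z hr hi
    rcases lt_or_gt_of_ne hr with hr | hr <;> rcases lt_or_gt_of_ne hi with hi | hi
    · have := beu_quad M M hMd hMd N hN hMN hMN C hC K hM1 hM2 (-z) (by simpa) (by simpa)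
      simpa [hG, hφ, hM] using this
    · have := beu_quad M H hMd hH N hN hMN hHN C hC K hM1 hK2 (-Complex.I * z) (by simpa) (by simpa)
      have e : ∀ t : ℝ, φ (t * z) = M (t * (-Complex.I * z)) * H (Complex.I * (t * (-Complex.I * z))) := by
        intro t
        have h1 : -(t * (-Complex.I * z)) = Complex.I * (t * z) := by ring
        have h2 : Complex.I * (t * (-Complex.I * z)) = t * z := by
          linear_combination (-t * z) * Complex.I_mul_I
        simp only [hφ, hM]
        rw [h1, h2, mul_comm]
      simp only [hG, e]
      simpa using this
    · have := beu_quad H M hH hMd N hN hHN hMN C hC K hK1 hM2 (Complex.I * z) (by simpa) (by simpa)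
      have e : ∀ t : ℝ, φ (t * z) = H (t * (Complex.I * z)) * M (Complex.I * (t * (Complex.I * z))) := by
        intro t
        have h1 : -(Complex.I * (t * (Complex.I * z))) = t * z := by
          linear_combination (-t * z) * Complex.I_mul_I
        have h2 : (t * (Complex.I * z)) = Complex.I * (t * z) := by ring
        simp only [hφ, hM]
        rw [h1, h2, mul_comm]
      simp only [hG, e]
      simpa using this
    · exact beu_quad H H hH hH N hN hHN hHN C hC K hK1 hK2 z hr hi
  have hev : ∀ a : ℝ, ∀ᶠ ε in nhdsWithin (0:ℝ) (Set.Ioi 0), a + ε ≠ 0 := by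
    intro a
    rcases lt_or_ge a 0 with ha | ha
    · filter_upwards [Ioo_mem_nhdsGT (neg_pos.2 ha)] with ε hε
      have := hε.2
      exact (by linarith : a + ε < 0).ne
    · filter_upwards [self_mem_nhdsWithin] with ε hε
      have : 0 < ε := hε
      positivity
  have hb : ∀ z : ℂ, ‖G z‖ ≤ K := by
    intro z
    have hc : Continuous fun ε : ℝ => ‖G (z + ε * (1 + Complex.I))‖ :=
      (hGd.continuous.comp (by fun_prop)).norm
    have ht := (hc.tendsto 0).mono_left (nhdsWithin_le_nhds (s := Set.Ioi 0))
    have := le_of_tendsto (b := K) ht (by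
      filter_upwards [hev z.re, hev z.im] with ε h1 h2
      exact hb0 _ (by simpa using h1) (by simpa using h2))
    simpa using this
  have hG0 : ∀ z, G z = 0 := by
    intro z
    have := hGd.apply_eq_apply_of_bounded (isBounded_iff_forall_norm_le.2
      ⟨K, by rintro _ ⟨z, rfl⟩; exact hb z⟩) z 0
    simpa [hG] using this
  have hφ0 : ∀ z, z ≠ 0 → φ z = 0 := by
    intro z hz
    have hcont : Continuous fun t : ℝ => φ (t * z) := hφd.continuous.comp (by fun_prop)
    have hd := intervalIntegral.integral_hasDerivAt_right (hcont.intervalIntegrable 0 1)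
      (hcont.stronglyMeasurableAtFilter _ _) hcont.continuousAt
    have hzero : (fun u : ℝ => ∫ t in (0:ℝ)..u, φ (t * z)) = fun _ => 0 := by
      ext u
      have h1 := intervalIntegral.smul_integral_comp_mul_left (a := 0) (b := 1)
        (fun t : ℝ => φ (t * z)) u
      simp only [mul_zero, mul_one] at h1
      rw [← h1]
      rcases eq_or_ne u 0 with rfl | hu
      · simp
      · have h2 := hG0 (u * z)
        simp only [hG] at h2
        rcases mul_eq_zero.1 h2 with h3 | h3
        · simp [hz, hu] at h3
        · have : ∫ x in (0:ℝ)..1, φ (((u * x : ℝ) : ℂ) * z) = 0 := by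
            rw [← h3]
            congr 1
            ext x
            congr 1
            push_cast
            ring
          rw [this, smul_zero]
    rw [hzero] at hd
    have := hd.unique (hasDerivAt_const _ _)
    simpa using this
  have hφ00 : φ 0 = 0 := by
    have h1 : Continuous φ := hφd.continuous
    have ht := (h1.tendsto 0).mono_left (nhdsWithin_le_nhds (s := {0}ᶜ))
    refine tendsto_nhds_unique ht ?_
    refine tendsto_const_nhds.congr' ?_
    filter_upwards [self_mem_nhdsWithin] with z hz
    exact (hφ0 z hz).symm
  have hall : ∀ z ∈ (Set.univ : Set ℂ), H z * H (Complex.I * z) = 0 := fun z _ => by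
    rcases eq_or_ne z 0 with rfl | hz
    · exact hφ00
    · exact hφ0 z hz
  have hHI : Differentiable ℂ fun z => H (Complex.I * z) := hH.comp (by fun_prop)
  rcases AnalyticOnNhd.eq_zero_or_eq_zero_of_mul_eq_zero (fun z _ => hH.analyticAt z)
    (fun z _ => hHI.analyticAt z) hall isPreconnected_univ with h | h
  · exact h z trivial
  · have := h (-Complex.I * z) trivial
    rw [← this]
    congr 1
    linear_combination (z) * Complex.I_mul_I

lemma beu_conv_integrable (w : ℝ × ℝ → ℝ) (hw : Integrable w) (c : ℝ) :
    Integrable (fun q : ℝ × (ℝ × ℝ) =>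
      w q.2 * Real.exp (-(1 / 2) * (q.1 - (q.2.1 + c * q.2.2)) ^ 2)) (volume.prod volume) := by
  have hg : Integrable fun x : ℝ => Real.exp (-(1 / 2) * x ^ 2) :=
    integrable_exp_neg_mul_sq (by norm_num)
  have hm : AEStronglyMeasurable (fun q : ℝ × (ℝ × ℝ) =>
      w q.2 * Real.exp (-(1 / 2) * (q.1 - (q.2.1 + c * q.2.2)) ^ 2)) (volume.prod volume) := by
    apply AEStronglyMeasurable.mul hw.1.comp_snd
    apply Continuous.aestronglyMeasurable
    fun_prop
  rw [integrable_prod_iff' hm]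
  constructor
  · refine Filter.Eventually.of_forall fun p => ?_
    exact (hg.comp_sub_right (p.1 + c * p.2)).const_mul (w p)
  · have : (fun p : ℝ × ℝ => ∫ x : ℝ, ‖w p * Real.exp (-(1 / 2) * (x - (p.1 + c * p.2)) ^ 2)‖)
        = fun p => ‖w p‖ * ∫ x : ℝ, Real.exp (-(1 / 2) * x ^ 2) := by
      ext p
      simp only [norm_mul, Real.norm_eq_abs, Real.abs_exp]
      rw [integral_const_mul, integral_sub_right_eq_self (fun x => Real.exp (-(1 / 2) * x ^ 2))]
    simp only
    rw [this]
    exact hw.norm.mul_const _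

lemma beu_triple (f F : ℝ → ℂ) (hf : Integrable f) (hF : Continuous F)
    (h : Integrable (fun p : ℝ × ℝ => ‖f p.1‖ * ‖F p.2‖ * Real.exp |p.1 * p.2|)) :
    Integrable (fun q : ℝ × (ℝ × ℝ) =>
      (‖f q.2.1‖ * Real.exp (-(1 / 2) * (q.1 - q.2.1) ^ 2)) *
        (‖F q.2.2‖ * Real.exp (-(1 / 2) * q.2.2 ^ 2 + |q.1| * |q.2.2|))) (volume.prod volume) := by
  have h1 := beu_conv_integrable _ h 1
  have h2 := beu_conv_integrable _ h (-1)
  refine (h1.add h2).mono' ?_ ?_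
  · have m1 : AEStronglyMeasurable (fun q : ℝ × (ℝ × ℝ) => ‖f q.2.1‖) (volume.prod volume) := by
      have : AEStronglyMeasurable (fun p : ℝ × ℝ => f p.1) volume := hf.1.comp_fst
      exact this.comp_snd.norm
    refine (m1.mul ?_).mul ?_
    · apply Continuous.aestronglyMeasurable
      fun_prop
    · apply Continuous.aestronglyMeasurable
      fun_prop
  · refine Filter.Eventually.of_forall fun ⟨x, t, y⟩ => ?_
    have hpos : 0 ≤ ‖f t‖ * ‖F y‖ := by positivity
    simp only [Pi.add_apply]
    rw [Real.norm_of_nonneg (by positivity)]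
    have key : Real.exp (-(1 / 2) * (x - t) ^ 2) * Real.exp (-(1 / 2) * y ^ 2 + |x| * |y|) ≤
        Real.exp |t * y| * Real.exp (-(1 / 2) * (x - (t + 1 * y)) ^ 2) +
        Real.exp |t * y| * Real.exp (-(1 / 2) * (x - (t + -1 * y)) ^ 2) := by
      rw [← Real.exp_add, ← Real.exp_add, ← Real.exp_add, ← abs_mul]
      rcases abs_cases (x * y) with ⟨hxy, _⟩ | ⟨hxy, _⟩
      · refine le_trans (Real.exp_le_exp.2 ?_) (le_add_of_nonneg_right (Real.exp_pos _).le)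
        rw [hxy]
        nlinarith [le_abs_self (t * y)]
      · refine le_trans (Real.exp_le_exp.2 ?_) (le_add_of_nonneg_left (Real.exp_pos _).le)
        rw [hxy]
        nlinarith [neg_abs_le (t * y)]
    calc _ = ‖f t‖ * ‖F y‖ * (Real.exp (-(1 / 2) * (x - t) ^ 2) *
          Real.exp (-(1 / 2) * y ^ 2 + |x| * |y|)) := by ring
      _ ≤ _ := mul_le_mul_of_nonneg_left key hpos
      _ = _ := by ring

theorem beurling_theorem_R (f : ℝ → ℂ) (hf : Integrable f)
    (F : ℝ → ℂ)
    (hF : ∀ y : ℝ, F y = ∫ t : ℝ, f t * Complex.exp (-(Complex.I * y * t)))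
    (h : Integrable (fun p : ℝ × ℝ => ‖f p.1‖ * ‖F p.2‖ * Real.exp |p.1 * p.2|)) :
    f =ᵐ[volume] 0 := by
  have hn1 : ∀ y t : ℝ, ‖Complex.exp (-(Complex.I * y * t))‖ = 1 := by
    intro y t
    rw [Complex.norm_exp]
    simp
  have hFc : Continuous F := by
    have : F = fun y : ℝ => ∫ t : ℝ, f t * Complex.exp (-(Complex.I * y * t)) := funext hF
    rw [this]
    apply continuous_of_dominated (bound := fun t => ‖f t‖)
    · intro y
      exact hf.1.mul (Continuous.aestronglyMeasurable (by fun_prop))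
    · intro y
      refine Filter.Eventually.of_forall fun t => ?_
      rw [norm_mul, hn1, mul_one]
    · exact hf.norm
    · refine Filter.Eventually.of_forall fun t => ?_
      fun_prop
  set A : ℝ := ∫ t, ‖f t‖ with hA
  have hFA : ∀ y, ‖F y‖ ≤ A := by
    intro y
    rw [hF]
    refine (norm_integral_le_integral_norm _).trans (le_of_eq ?_)
    simp only [norm_mul, hn1, mul_one, hA]
  have hg : Integrable fun x : ℝ => Real.exp (-(1 / 4) * x ^ 2) :=
    integrable_exp_neg_mul_sq (by norm_num)
  have hbd : ∀ r y : ℝ, ‖F y‖ * Real.exp (-(1 / 2) * y ^ 2 + r * |y|) ≤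
      A * Real.exp (r ^ 2) * Real.exp (-(1 / 4) * y ^ 2) := by
    intro r y
    rw [mul_assoc, ← Real.exp_add]
    have := hFA y
    refine mul_le_mul this (Real.exp_le_exp.2 ?_) (Real.exp_pos _).le ((norm_nonneg _).trans this)
    nlinarith [sq_nonneg (|y| / 2 - r), sq_abs y, sq_nonneg r]
  have hNi : ∀ r : ℝ, Integrable fun y : ℝ => ‖F y‖ * Real.exp (-(1 / 2) * y ^ 2 + r * |y|) := by
    intro r
    refine (hg.const_mul (A * Real.exp (r ^ 2))).mono'
      (Continuous.aestronglyMeasurable (by fun_prop)) (Filter.Eventually.of_forall fun y => ?_)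
    rw [Real.norm_of_nonneg (by positivity)]
    exact hbd r y
  set N : ℝ → ℝ := fun r => ∫ y, ‖F y‖ * Real.exp (-(1 / 2) * y ^ 2 + r * |y|) with hN
  have hNm : Monotone N := by
    intro a b hab
    apply integral_mono (hNi a) (hNi b)
    intro y
    dsimp only
    gcongr
  have hN0 : ∀ r, 0 ≤ N r := fun r => integral_nonneg fun y => by positivity
  set C : ℝ := A * ∫ y : ℝ, Real.exp (-(1 / 4) * y ^ 2) with hC
  have hNC : ∀ r, N r ≤ C * Real.exp (r ^ 2) := by
    intro r
    have := integral_mono (hNi r) (hg.const_mul (A * Real.exp (r ^ 2))) (hbd r)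
    rw [integral_const_mul] at this
    refine this.trans (le_of_eq ?_)
    rw [hC]
    ring
  set k : ℂ → ℝ → ℂ := fun z y => F y * Complex.exp (-(1 / 2) * y ^ 2 + Complex.I * z * y) with hk
  have hkn : ∀ z y, ‖k z y‖ ≤ ‖F y‖ * Real.exp (-(1 / 2) * y ^ 2 + ‖z‖ * |y|) := by
    intro z y
    simp only [hk]
    rw [norm_mul, Complex.norm_exp]
    gcongr
    have h1 : (-(1 / 2) * (y : ℂ) ^ 2 + Complex.I * z * y).re = -(1 / 2) * y ^ 2 - z.im * y := by
      rw [show -(1 / 2) * (y : ℂ) ^ 2 = ((-(1 / 2) * y ^ 2 : ℝ) : ℂ) by push_cast; ring]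
      rw [Complex.add_re, Complex.ofReal_re]
      simp
      ring
    rw [h1]
    have h2 : -(z.im * y) ≤ |z.im| * |y| := by
      rw [← abs_mul]
      exact neg_le_abs _
    have h3 : |z.im| * |y| ≤ ‖z‖ * |y| := by
      gcongr
      exact Complex.abs_im_le_norm z
    linarith
  have hkc : ∀ z, Continuous (k z) := fun z => by
    simp only [hk]
    fun_prop
  set H : ℂ → ℂ := fun z => ∫ y, k z y with hH
  have hHd : Differentiable ℂ H := by
    apply beu_diff_integral k
    · exact fun z => (hkc z).aestronglyMeasurable
    · intro y
      simp only [hk]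
      fun_prop
    · intro R
      refine ⟨_, hNi R, Filter.Eventually.of_forall fun y z hz => (hkn z y).trans ?_⟩
      gcongr
  have hHN : ∀ z, ‖H z‖ ≤ N ‖z‖ := fun z =>
    norm_integral_le_of_norm_le (hNi _) (Filter.Eventually.of_forall (hkn z))
  set D : ℝ := ‖((Real.pi : ℂ) / (1 / 2 : ℂ)) ^ (1 / 2 : ℂ)‖ with hD
  have hHx : ∀ x : ℝ, ‖H x‖ ≤ D * ∫ t, ‖f t‖ * Real.exp (-(1 / 2) * (x - t) ^ 2) := by
    intro x
    have hg2 : Integrable fun y : ℝ => Complex.exp (-(1 / 2) * y ^ 2 + Complex.I * x * y) := by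
      have := integrable_cexp_quadratic (b := 1 / 2) (by norm_num) (Complex.I * x) 0
      simpa using this
    have e1 : H x = ∫ t : ℝ, f t * (((Real.pi : ℂ) / (1 / 2 : ℂ)) ^ (1 / 2 : ℂ) *
        Complex.exp (-((x : ℂ) - t) ^ 2 / (4 * (1 / 2)))) := by
      calc H x = ∫ y : ℝ, ∫ t : ℝ, f t * Complex.exp (-(Complex.I * y * t)) *
            Complex.exp (-(1 / 2) * y ^ 2 + Complex.I * x * y) := by
            simp only [hH, hk]
            congr 1
            ext y
            rw [hF, integral_mul_const]
        _ = ∫ t : ℝ, ∫ y : ℝ, f t * Complex.exp (-(Complex.I * y * t)) *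
            Complex.exp (-(1 / 2) * y ^ 2 + Complex.I * x * y) := by
            apply integral_integral_swap
            refine (hg2.mul_prod hf).mono ?_ ?_
            · refine (hf.1.comp_snd.mul ?_).mul ?_
              · exact Continuous.aestronglyMeasurable (by fun_prop)
              · exact Continuous.aestronglyMeasurable (by fun_prop)
            · refine Filter.Eventually.of_forall fun ⟨y, t⟩ => ?_
              simp only [Function.uncurry, norm_mul, hn1]
              rw [mul_one, mul_comm]
        _ = _ := by
            congr 1
            ext t
            rw [← fourierIntegral_gaussian (b := 1 / 2) (by norm_num) ((x : ℂ) - t),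
              ← integral_const_mul]
            congr 1
            ext y
            rw [mul_assoc, ← Complex.exp_add, ← Complex.exp_add]
            congr 2
            ring
    rw [e1]
    refine (norm_integral_le_integral_norm _).trans (le_of_eq ?_)
    rw [← integral_const_mul]
    congr 1
    ext t
    rw [norm_mul, norm_mul, ← hD, Complex.norm_exp]
    have : (-((x : ℂ) - t) ^ 2 / (4 * (1 / 2))).re = -(1 / 2) * (x - t) ^ 2 := by
      rw [show (-((x : ℂ) - t) ^ 2 / (4 * (1 / 2))) = ((-(1 / 2) * (x - t) ^ 2 : ℝ) : ℂ) by
        push_cast; ring]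
      exact Complex.ofReal_re _
    rw [this]
    ring
  have hint : Integrable fun x : ℝ => ‖H x‖ * N |x| := by
    have h3 := (beu_triple f F hf hFc h).integral_prod_left
    refine (h3.const_mul D).mono' ?_ ?_
    · refine AEStronglyMeasurable.mul ?_ ?_
      · exact ((hHd.continuous.comp Complex.continuous_ofReal).norm).aestronglyMeasurable
      · exact (hNm.measurable.comp measurable_norm).aestronglyMeasurable
    · refine Filter.Eventually.of_forall fun x => ?_
      have hx0 := hN0 |x|
      rw [Real.norm_of_nonneg (by positivity)]
      have e2 := integral_prod_mul (μ := (volume : Measure ℝ)) (ν := (volume : Measure ℝ))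
        (fun t : ℝ => ‖f t‖ * Real.exp (-(1 / 2) * (x - t) ^ 2))
        (fun y : ℝ => ‖F y‖ * Real.exp (-(1 / 2) * y ^ 2 + |x| * |y|))
      have e3 : ‖H x‖ * N |x| ≤ D * (∫ t, ‖f t‖ * Real.exp (-(1 / 2) * (x - t) ^ 2)) * N |x| := by
        gcongr
        exact hHx x
      refine e3.trans (le_of_eq ?_)
      rw [mul_assoc]
      congr 1
      exact e2.symm
  have hKgen : ∀ P : ℝ → ℝ, (∀ s, 0 ≤ P s) → Integrable (fun s => P s * N |s|) → ∀ T : ℝ, 0 ≤ T →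
      ∫ s in (0:ℝ)..T, P s * N s ≤ ∫ s, P s * N |s| := by
    intro P hP hPi T hT
    rw [intervalIntegral.integral_of_le hT]
    calc ∫ s in Set.Ioc 0 T, P s * N s = ∫ s in Set.Ioc 0 T, P s * N |s| := by
          apply setIntegral_congr_fun measurableSet_Ioc
          intro s hs
          simp only [abs_of_pos hs.1]
      _ ≤ _ := setIntegral_le_integral hPi
          (Filter.Eventually.of_forall fun s => mul_nonneg (hP s) (hN0 _))
  have hint2 : Integrable fun x : ℝ => ‖H (-x)‖ * N |x| := by
    have := hint.comp_neg
    simpa using this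
  have hKeq : ∫ x : ℝ, ‖H (-x)‖ * N |x| = ∫ x : ℝ, ‖H x‖ * N |x| := by
    have := integral_neg_eq_self (fun x : ℝ => ‖H x‖ * N |x|) volume
    simpa using this
  have hHzero := beu_liouville H hHd N hNm hHN C hNC (∫ x : ℝ, ‖H x‖ * N |x|)
    (hKgen (fun s => ‖H s‖) (fun s => norm_nonneg _) hint)
    (fun T hT => hKeq ▸ hKgen (fun s => ‖H (-s)‖) (fun s => norm_nonneg _) hint2 T hT)
  have hu := beu_ft_inj (k 0) ((hNi 0).mono' (hkc 0).aestronglyMeasurable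
    (Filter.Eventually.of_forall fun y => by simpa using hkn 0 y)) (by
      intro x
      refine Eq.trans ?_ (hHzero (-x))
      simp only [hH, hk]
      congr 1
      ext y
      rw [mul_assoc, ← Complex.exp_add]
      congr 2
      ring)
  have hF0 : F = 0 := by
    rw [← hFc.ae_eq_iff_eq volume continuous_zero]
    filter_upwards [hu] with y hy
    simpa [hk] using hy
  apply beu_ft_inj f hf
  intro y
  rw [← hF, hF0]
  rfl
end

section
/- Let g ∈ L¹(ℝ) and define M(g)(λ) = ∫_ℝ |g(x)| e^{|λ||x|} dx (possibly +∞). If ∫_ℝ M(g)(λ) |g̃(λ)| dλ < ∞, where g̃ is the Fourier transform of g, then g = 0 almost everywhere. -/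
open MeasureTheory

lemma liouville_two (H : ℂ → ℂ) (C : ℝ)
    (hd : ∀ z, z ≠ Complex.I → z ≠ -Complex.I → DifferentiableAt ℂ H z)
    (hb : ∀ z, z ≠ Complex.I → z ≠ -Complex.I → ‖H z‖ ≤ C) (z w : ℂ)
    (hz : z ≠ Complex.I) (hz' : z ≠ -Complex.I) (hw : w ≠ Complex.I) (hw' : w ≠ -Complex.I) :
    H z = H w := by
  have hne : (Complex.I : ℂ) ≠ -Complex.I := by
    intro h
    have := congrArg Complex.im h
    norm_num at this
  set a := (nhdsWithin Complex.I {Complex.I}ᶜ).limUnder H with ha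
  have h1 : DifferentiableOn ℂ (Function.update H Complex.I a) ({-Complex.I}ᶜ) := by
    apply Complex.differentiableOn_update_limUnder_of_bddAbove
    · exact isOpen_compl_singleton.mem_nhds hne
    · intro x hx
      exact (hd x hx.2 hx.1).differentiableWithinAt
    · refine ⟨C, ?_⟩
      rintro _ ⟨x, hx, rfl⟩
      exact hb x hx.2 hx.1
  set H1 := Function.update H Complex.I a with hH1
  set b := (nhdsWithin (-Complex.I) {-Complex.I}ᶜ).limUnder H1 with hbb
  have hb1 : ∀ x, x ≠ -Complex.I → ‖H1 x‖ ≤ max C ‖a‖ := by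
    intro x hx
    by_cases hxi : x = Complex.I
    · rw [hxi, hH1, Function.update_self]; exact le_max_right _ _
    · rw [hH1, Function.update_of_ne hxi]; exact (hb x hxi hx).trans (le_max_left _ _)
  have h2 : DifferentiableOn ℂ (Function.update H1 (-Complex.I) b) Set.univ := by
    apply Complex.differentiableOn_update_limUnder_of_bddAbove
    · exact Filter.univ_mem
    · exact h1.mono (fun x hx => hx.2)
    · refine ⟨max C ‖a‖, ?_⟩
      rintro _ ⟨x, hx, rfl⟩
      exact hb1 x hx.2
  have h3 := (differentiableOn_univ.1 h2).apply_eq_apply_of_bounded (by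
    rw [isBounded_iff_forall_norm_le]
    refine ⟨max (max C ‖a‖) ‖b‖, ?_⟩
    rintro _ ⟨x, rfl⟩
    by_cases hxi : x = -Complex.I
    · rw [hxi, Function.update_self]; exact le_max_right _ _
    · rw [Function.update_of_ne hxi]; exact (hb1 x hxi).trans (le_max_left _ _)) z w
  rwa [Function.update_of_ne hz', Function.update_of_ne hw', hH1, Function.update_of_ne hz,
    Function.update_of_ne hw] at h3

def UU : Set ℂ := {z | 0 < z.re ∧ |z.im| < 1 ∧ |z.im| < Complex.normSq z}

lemma UU_open : IsOpen UU := by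
  have h1 : Continuous fun z : ℂ => |z.im| := Complex.continuous_im.abs
  exact (isOpen_lt continuous_const Complex.continuous_re).inter
    ((isOpen_lt h1 continuous_const).inter (isOpen_lt h1 Complex.continuous_normSq))

lemma UU_preconn : IsPreconnected UU := by
  have hV : Convex ℝ {z : ℂ | 1 < z.re ∧ |z.im| < 1} := by
    have : {z : ℂ | 1 < z.re ∧ |z.im| < 1} = {z : ℂ | 1 < z.re} ∩ ({z | z.im < 1} ∩ {z | -1 < z.im}) := by
      ext z; simp [abs_lt]; tauto
    rw [this]
    exact (convex_halfSpace_re_gt 1).inter ((convex_halfSpace_im_lt 1).inter (convex_halfSpace_im_gt (-1)))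
  apply isPreconnected_of_forall (2 : ℂ)
  intro y hy
  obtain ⟨h1, h2, h3⟩ := hy
  rw [Complex.normSq_apply] at h3
  refine ⟨segment ℝ y (y+2) ∪ {z : ℂ | 1 < z.re ∧ |z.im| < 1}, ?_, ?_, ?_, ?_⟩
  · rintro z (hz | ⟨hz1, hz2⟩)
    · rw [segment_eq_image'] at hz
      obtain ⟨t, ⟨ht0, ht1⟩, rfl⟩ := hz
      refine ⟨?_, ?_, ?_⟩
      · simp; linarith
      · simpa using h2
      · simp [Complex.normSq_apply]
        nlinarith
    · refine ⟨by linarith, hz2, ?_⟩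
      rw [Complex.normSq_apply]
      nlinarith [mul_self_nonneg z.im]
  · right; simp
  · left; exact left_mem_segment _ _ _
  · refine IsPreconnected.union (y+2) (right_mem_segment _ _ _) ?_ (convex_segment _ _).isPreconnected
      hV.isPreconnected
    simp [h2]; linarith

lemma ident (A B : ℂ → ℂ) (hA : DifferentiableOn ℂ A UU) (hB : DifferentiableOn ℂ B UU)
    (h : ∀ t : ℝ, 0 < t → A t = B t) : Set.EqOn A B UU := by
  have h1 : (1 : ℂ) ∈ UU := by simp [UU]
  refine (hA.analyticOnNhd UU_open).eqOn_of_preconnected_of_frequently_eq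
    (hB.analyticOnNhd UU_open) UU_preconn h1 ?_
  have hm : Filter.Tendsto (fun n : ℕ => ((1 + 1 / ((n : ℝ) + 1) : ℝ) : ℂ)) Filter.atTop
      (nhdsWithin 1 {1}ᶜ) := by
    rw [tendsto_nhdsWithin_iff]
    constructor
    · have := (tendsto_one_div_add_atTop_nhds_zero_nat (𝕜 := ℝ)).const_add 1
      have h2 := (Complex.continuous_ofReal.tendsto _).comp this
      simpa [Function.comp_def] using h2
    · refine Filter.Eventually.of_forall fun n => ?_
      have : (0:ℝ) < 1 / ((n : ℝ) + 1) := by positivity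
      simp only [Set.mem_compl_iff, Set.mem_singleton_iff]
      intro hh
      have := congrArg Complex.re hh
      simp at this
      norm_cast at this
  refine hm.frequently (Filter.Frequently.of_forall fun n => ?_)
  exact h _ (by positivity)

lemma glue (F : ℂ → ℂ) (C : ℝ) (hd : ∀ z : ℂ, |z.im| < 1 → DifferentiableAt ℂ F z)
    (hb : ∀ z : ℂ, |z.im| ≤ 1 → ‖F z‖ ≤ C)
    (hr : ∀ t : ℝ, t ≠ 0 → F ((t⁻¹ : ℝ) : ℂ) = (|t| : ℝ) * (starRingEnd ℂ) (F t)) : F 1 = 0 := by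
  have hC : 0 ≤ C := (norm_nonneg _).trans (hb 0 (by simp))
  set A : ℂ → ℂ := fun z => F z ^ 2 with hA
  set B : ℂ → ℂ := fun z => (z⁻¹) ^ 2 * ((starRingEnd ℂ) (F ((starRingEnd ℂ) z⁻¹))) ^ 2 with hB
  have im_inv : ∀ z : ℂ, z ≠ 0 → |z.im| < Complex.normSq z → |(z⁻¹).im| < 1 := by
    intro z hz h
    have : 0 < Complex.normSq z := Complex.normSq_pos.2 hz
    rw [Complex.inv_im, abs_div, abs_neg, abs_of_pos this, div_lt_one this]
    exact h
  have ne0 : ∀ z : ℂ, |z.im| < Complex.normSq z → z ≠ 0 := by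
    rintro z h rfl; simp at h
  have hAd : ∀ z : ℂ, |z.im| < 1 → DifferentiableAt ℂ A z := fun z hz => (hd z hz).pow 2
  have hBd : ∀ z : ℂ, |z.im| < Complex.normSq z → DifferentiableAt ℂ B z := by
    intro z hz
    have hz0 := ne0 z hz
    have h1 := im_inv z hz0 hz
    have h2 : DifferentiableAt ℂ (starRingEnd ℂ ∘ F ∘ starRingEnd ℂ) z⁻¹ := by
      rw [differentiableAt_conj_conj_iff]
      apply hd
      rw [Complex.conj_im, abs_neg]
      exact h1
    have h3 := DifferentiableAt.comp z h2 (differentiableAt_inv hz0)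
    exact ((differentiableAt_inv hz0).pow 2).mul (h3.pow 2)
  have hBb : ∀ z : ℂ, |z.im| < Complex.normSq z → ‖B z‖ ≤ C ^ 2 / ‖z‖ ^ 2 := by
    intro z hz
    have h1 := im_inv z (ne0 z hz) hz
    have h2 := hb ((starRingEnd ℂ) z⁻¹) (by rw [Complex.conj_im, abs_neg]; exact h1.le)
    simp only [hB, norm_mul, norm_pow, RCLike.norm_conj, norm_inv]
    rw [div_eq_mul_inv, mul_comm, inv_pow]
    gcongr
  have hreal : ∀ t : ℝ, t ≠ 0 → A t = B t := by
    intro t ht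
    have := hr t⁻¹ (inv_ne_zero ht)
    rw [inv_inv] at this
    simp only [hA, hB]
    rw [this, mul_pow, ← Complex.ofReal_pow, sq_abs]
    simp
  have hp : Set.EqOn A B UU := ident A B (fun z hz => (hAd z hz.2.1).differentiableWithinAt)
    (fun z hz => (hBd z hz.2.2).differentiableWithinAt) (fun t ht => hreal t ht.ne')
  have hn : Set.EqOn (fun z => A (-z)) (fun z => B (-z)) UU := by
    refine ident _ _ (fun z hz => ?_) (fun z hz => ?_) (fun t ht => ?_)
    · exact (DifferentiableAt.comp z (hAd (-z) (by simpa using hz.2.1))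
        differentiableAt_id.neg).differentiableWithinAt
    · exact (DifferentiableAt.comp z (hBd (-z) (by simpa using hz.2.2))
        differentiableAt_id.neg).differentiableWithinAt
    · have := hreal (-t) (by simpa using ht.ne')
      simpa using this
  have hAB : ∀ z : ℂ, |z.im| < 1 → |z.im| < Complex.normSq z → A z = B z := by
    intro z h1 h2
    rcases lt_trichotomy z.re 0 with h | h | h
    · have := hn (x := -z) ⟨by simpa using h, by simpa using h1, by simpa using h2⟩
      simpa using this
    · rw [Complex.normSq_apply, h] at h2
      exfalso
      nlinarith [abs_nonneg z.im, abs_mul_abs_self z.im]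
    · exact hp ⟨h, h1, h2⟩
  classical
  set H : ℂ → ℂ := fun z => if |z.im| < 1 then A z else B z with hH
  have hcov : ∀ z : ℂ, z ≠ Complex.I → z ≠ -Complex.I → ¬ |z.im| < 1 →
      |z.im| < Complex.normSq z := by
    intro z h1 h2 h3
    push Not at h3
    rw [Complex.normSq_apply]
    by_cases hre : z.re = 0
    · have : |z.im| ≠ 1 := by
        intro h
        rcases eq_or_eq_neg_of_abs_eq h with h | h
        · exact h1 (Complex.ext (by simpa using hre) (by simpa using h))
        · exact h2 (Complex.ext (by simpa using hre) (by simpa using h))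
      have : 1 < |z.im| := lt_of_le_of_ne h3 this.symm
      nlinarith [abs_mul_abs_self z.im, mul_self_nonneg z.re]
    · have : 0 < z.re * z.re := mul_self_pos.2 hre
      nlinarith [abs_mul_abs_self z.im]
  have cim : Continuous fun z : ℂ => |z.im| := Complex.continuous_im.abs
  have hHd : ∀ z, z ≠ Complex.I → z ≠ -Complex.I → DifferentiableAt ℂ H z := by
    intro z h1 h2
    by_cases h3 : |z.im| < 1
    · refine (hAd z h3).congr_of_eventuallyEq ?_
      filter_upwards [(isOpen_lt cim continuous_const).mem_nhds h3] with w hw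
      exact if_pos hw
    · have h4 := hcov z h1 h2 h3
      refine (hBd z h4).congr_of_eventuallyEq ?_
      filter_upwards [(isOpen_lt cim Complex.continuous_normSq).mem_nhds h4] with w hw
      by_cases h5 : |w.im| < 1
      · simp only [hH, if_pos h5]; exact hAB w h5 hw
      · simp only [hH, if_neg h5]
  have hHb : ∀ z, z ≠ Complex.I → z ≠ -Complex.I → ‖H z‖ ≤ C ^ 2 := by
    intro z h1 h2
    by_cases h3 : |z.im| < 1
    · simp only [hH, if_pos h3, hA, norm_pow]
      have := hb z h3.le
      gcongr
    · have h4 := hcov z h1 h2 h3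
      simp only [hH, if_neg h3]
      refine (hBb z h4).trans (div_le_self (by positivity) ?_)
      have : 1 ≤ ‖z‖ := (not_lt.1 h3).trans (Complex.abs_im_le_norm z)
      nlinarith
  have rne : ∀ t : ℝ, (t : ℂ) ≠ Complex.I ∧ (t : ℂ) ≠ -Complex.I := by
    intro t
    constructor <;> intro h <;> simpa using congrArg Complex.im h
  have hconst : ∀ t : ℝ, t ≠ 0 → ‖F 1 ^ 2‖ ≤ C ^ 2 / t ^ 2 := by
    intro t ht
    have h1 := liouville_two H (C^2) hHd hHb (1 : ℝ) t (rne 1).1 (rne 1).2 (rne t).1 (rne t).2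
    have h2 : H ((1 : ℝ) : ℂ) = F 1 ^ 2 := by simp [hH, hA]
    have h3 : H t = B t := by
      rw [← hreal t ht]; simp [hH]
    rw [← h2, h1, h3]
    refine (hBb t (by simpa using ht)).trans (le_of_eq ?_)
    simp
  have hlim : Filter.Tendsto (fun t : ℝ => C ^ 2 / t ^ 2) Filter.atTop (nhds 0) :=
    tendsto_const_nhds.div_atTop (Filter.tendsto_pow_atTop (by norm_num))
  have : ‖F 1 ^ 2‖ ≤ 0 := ge_of_tendsto hlim (by
    filter_upwards [Filter.eventually_ne_atTop 0] with t ht using hconst t ht)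
  simpa using this

lemma norm_kernel (z : ℂ) (x y : ℝ) :
    ‖Complex.exp (Complex.I * z * (x * y))‖ ≤ Real.exp (|z.im| * |x * y|) := by
  rw [Complex.norm_exp]
  apply Real.exp_le_exp.2
  rw [← abs_mul]
  refine le_trans (le_of_eq ?_) (neg_le_abs _)
  simp

lemma core (g G : ℝ → ℂ) (hg : Continuous g) (hGc : Continuous G)
    (hinv : ∀ x : ℝ, g x = ∫ y : ℝ, G y * Complex.exp (Complex.I * x * y))
    (hI : Integrable (fun p : ℝ × ℝ => ‖g p.1‖ * ‖G p.2‖ * Real.exp |p.1 * p.2|)) : g = 0 := by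
  set K : ℂ → ℝ × ℝ → ℂ := fun z p =>
    (starRingEnd ℂ) (g p.1) * G p.2 * Complex.exp (Complex.I * z * (p.1 * p.2)) with hK
  have hKc : ∀ z, Continuous (K z) := by
    intro z
    have : Continuous fun p : ℝ × ℝ => (starRingEnd ℂ) (g p.1) :=
      Complex.continuous_conj.comp (hg.comp continuous_fst)
    simp only [hK]
    fun_prop
  have hKb : ∀ z : ℂ, |z.im| ≤ 1 → ∀ p, ‖K z p‖ ≤ ‖g p.1‖ * ‖G p.2‖ * Real.exp |p.1 * p.2| := by
    intro z hz p
    simp only [hK, norm_mul, RCLike.norm_conj]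
    gcongr
    refine (norm_kernel z p.1 p.2).trans (Real.exp_le_exp.2 ?_)
    exact mul_le_of_le_one_left (abs_nonneg _) hz
  have hKi : ∀ z : ℂ, |z.im| ≤ 1 → Integrable (K z) := fun z hz =>
    hI.mono' (hKc z).aestronglyMeasurable (Filter.Eventually.of_forall (hKb z hz))
  set F : ℂ → ℂ := fun z => ∫ p, K z p with hF
  have hFb : ∀ z : ℂ, |z.im| ≤ 1 →
      ‖F z‖ ≤ ∫ p : ℝ × ℝ, ‖g p.1‖ * ‖G p.2‖ * Real.exp |p.1 * p.2| := fun z hz =>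
    norm_integral_le_of_norm_le hI (Filter.Eventually.of_forall (hKb z hz))
  have hFd : ∀ z : ℂ, |z.im| < 1 → DifferentiableAt ℂ F z := by
    intro z hz
    obtain ⟨r, hr1, hr2⟩ := exists_between hz
    have hδ : 0 < 1 - r := by linarith
    have hs : {w : ℂ | |w.im| < r} ∈ nhds z :=
      (isOpen_lt Complex.continuous_im.abs continuous_const).mem_nhds hr1
    refine (hasDerivAt_integral_of_dominated_loc_of_deriv_le (F := K)
      (F' := fun w p => K w p * (Complex.I * (p.1 * p.2)))
      (bound := fun p => (1 - r)⁻¹ * (‖g p.1‖ * ‖G p.2‖ * Real.exp |p.1 * p.2|))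
      hs ?_ (hKi z hz.le) ?_ ?_ (hI.const_mul _) ?_).2.differentiableAt
    · exact Filter.Eventually.of_forall fun w => (hKc w).aestronglyMeasurable
    · have := hKc z
      exact Continuous.aestronglyMeasurable (by fun_prop)
    · refine Filter.Eventually.of_forall fun p w hw => ?_
      have hw' : |w.im| < r := hw
      set t := |p.1 * p.2| with ht
      have ht0 : 0 ≤ t := abs_nonneg _
      have h1 : ‖Complex.exp (Complex.I * w * (p.1 * p.2))‖ ≤ Real.exp (r * t) :=
        (norm_kernel w p.1 p.2).trans (Real.exp_le_exp.2 (by gcongr))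
      have h2 : t ≤ (1 - r)⁻¹ * Real.exp ((1 - r) * t) := by
        rw [inv_mul_eq_div, le_div_iff₀ hδ]
        have := Real.add_one_le_exp ((1 - r) * t)
        linarith
      have h3 : Real.exp (r * t) * t ≤ (1 - r)⁻¹ * Real.exp t := by
        calc Real.exp (r * t) * t ≤ Real.exp (r * t) * ((1 - r)⁻¹ * Real.exp ((1 - r) * t)) := by
              gcongr
          _ = (1 - r)⁻¹ * (Real.exp (r * t) * Real.exp ((1 - r) * t)) := by ring
          _ = (1 - r)⁻¹ * Real.exp t := by rw [← Real.exp_add]; congr 2; ring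
      have h4 : ‖Complex.I * ((p.1 : ℂ) * p.2)‖ = t := by
        rw [norm_mul, Complex.norm_I, one_mul, ← Complex.ofReal_mul, Complex.norm_real,
          Real.norm_eq_abs]
      rw [norm_mul, h4]
      simp only [hK, norm_mul, RCLike.norm_conj]
      calc _ ≤ ‖g p.1‖ * ‖G p.2‖ * Real.exp (r * t) * t := by gcongr
        _ = ‖g p.1‖ * ‖G p.2‖ * (Real.exp (r * t) * t) := by ring
        _ ≤ ‖g p.1‖ * ‖G p.2‖ * ((1 - r)⁻¹ * Real.exp t) := by gcongr
        _ = _ := by ring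
    · refine Filter.Eventually.of_forall fun p w _ => ?_
      have h1 : HasDerivAt (fun w : ℂ => Complex.I * w * ((p.1 : ℂ) * p.2))
          (Complex.I * (p.1 * p.2)) w := by
        simpa using ((hasDerivAt_id w).const_mul Complex.I).mul_const ((p.1 : ℂ) * p.2)
      have h2 := h1.cexp.const_mul ((starRingEnd ℂ) (g p.1) * G p.2)
      exact h2.congr_deriv (by simp only [hK]; ring)
  have hin : ∀ t x : ℝ, ∫ y, K t (x, y) = (starRingEnd ℂ) (g x) * g (t * x) := by
    intro t x
    rw [hinv (t * x), ← integral_const_mul]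
    congr 1
    ext y
    simp only [hK]
    push_cast
    rw [mul_assoc]
    congr 3
    ring
  have hFr : ∀ t : ℝ, F t = ∫ x : ℝ, (starRingEnd ℂ) (g x) * g (t * x) := by
    intro t
    simp only [hF]
    have hi := hKi t (by simp)
    rw [Measure.volume_eq_prod] at hi ⊢
    rw [integral_prod _ hi]
    simp only [hin]
  have hr : ∀ t : ℝ, t ≠ 0 → F ((t⁻¹ : ℝ) : ℂ) = (|t| : ℝ) * (starRingEnd ℂ) (F t) := by
    intro t ht
    rw [hFr, hFr, ← integral_conj]
    have := Measure.integral_comp_mul_left (fun x => (starRingEnd ℂ) (g x) * g (t⁻¹ * x)) t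
    have h2 : ∀ x : ℝ, t⁻¹ * (t * x) = x := fun x => by field_simp
    simp only [h2] at this
    have h3 : ∀ x : ℝ, (starRingEnd ℂ) ((starRingEnd ℂ) (g x) * g (t * x)) =
      (starRingEnd ℂ) (g (t * x)) * g x := fun x => by simp [mul_comm]
    simp only [h3]
    rw [this, Complex.real_smul, ← mul_assoc, ← Complex.ofReal_mul, ← abs_mul,
      mul_inv_cancel₀ ht]
    simp
  have h0 : F 1 = 0 := glue F _ hFd hFb hr
  have hi1 : Integrable (fun x : ℝ => (starRingEnd ℂ) (g x) * g x) := by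
    have hi := hKi (1 : ℝ) (by simp)
    rw [Measure.volume_eq_prod] at hi
    have := hi.integral_prod_left
    simpa only [hin, one_mul] using this
  have h1 := hFr 1
  rw [Complex.ofReal_one, h0] at h1
  simp only [one_mul, mul_comm ((starRingEnd ℂ) _), Complex.mul_conj] at h1 hi1
  rw [integral_complex_ofReal] at h1
  have h2 : ∫ x, Complex.normSq (g x) = 0 := by exact_mod_cast h1.symm
  have hi2 : Integrable (fun x => Complex.normSq (g x)) := by simpa using! hi1.re
  rw [integral_eq_zero_iff_of_nonneg (fun x => Complex.normSq_nonneg _) hi2] at h2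
  replace h2 := (Continuous.ae_eq_iff_eq volume (Complex.continuous_normSq.comp hg)
    continuous_zero).1 h2
  ext x
  simpa using congrFun h2 x

open scoped FourierTransform in
lemma continuous_four (f : ℝ → ℂ) (hf : Integrable f) : Continuous (𝓕 f) :=
  VectorFourier.fourierIntegral_continuous Real.continuous_fourierChar
    (L := innerₗ ℝ) continuous_inner hf

open scoped FourierTransform in
lemma four_flip (f g : ℝ → ℂ) (hf : Integrable f) (hg : Integrable g) :
    ∫ x, 𝓕 f x * g x = ∫ x, f x * 𝓕 g x := by
  simpa using! VectorFourier.integral_fourierIntegral_smul_eq_flip (L := innerₗ ℝ)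
      Real.continuous_fourierChar continuous_inner hf hg

open scoped FourierTransform SchwartzMap in
lemma inversion_ae (g : ℝ → ℂ) (hg : Integrable g) (hG : Integrable (𝓕 g)) :
    g =ᵐ[volume] 𝓕⁻ (𝓕 g) := by
  have hneg : ∀ f : ℝ → ℂ, 𝓕⁻ f = fun x => 𝓕 f (-x) := by
    intro f; ext x; exact Real.fourierInv_eq_fourier_neg f x
  have hc : Continuous (𝓕⁻ (𝓕 g)) := by
    rw [hneg]
    exact (continuous_four _ hG).comp continuous_neg
  refine ae_eq_of_integral_contDiff_smul_eq hg.locallyIntegrable hc.locallyIntegrable ?_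
  intro φ hφ hφc
  have hφ' : ContDiff ℝ ((⊤ : ℕ∞) : WithTop ℕ∞) (fun x => (φ x : ℂ)) :=
    Complex.ofRealCLM.contDiff.comp hφ
  have hφc' : HasCompactSupport (fun x => (φ x : ℂ)) := hφc.comp_left (g := fun t : ℝ => (t : ℂ)) (by simp)
  set ψ : 𝓢(ℝ, ℂ) := hφc'.toSchwartzMap hφ' with hψ
  have hψv : ∀ x, ψ x = (φ x : ℂ) := fun x => by simp [hψ]
  have e1 : ∫ x, φ x • g x = ∫ x, ψ x * g x := by simp [hψv]
  have e2 : ∫ x, φ x • 𝓕⁻ (𝓕 g) x = ∫ x, ψ x * 𝓕⁻ (𝓕 g) x := by simp [hψv]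
  rw [e1, e2]
  have hsi : Integrable (𝓕⁻ (ψ : ℝ → ℂ)) := by
    rw [← SchwartzMap.fourierInv_coe]
    exact (𝓕⁻ ψ).integrable
  have hf : 𝓕 (𝓕⁻ (ψ : ℝ → ℂ)) = ψ := by
    rw [← SchwartzMap.fourierInv_coe, ← SchwartzMap.fourier_coe,
      FourierTransform.fourier_fourierInv_eq]
  calc ∫ x, ψ x * g x = ∫ x, 𝓕 (𝓕⁻ (ψ : ℝ → ℂ)) x * g x := by rw [hf]
    _ = ∫ x, 𝓕⁻ (ψ : ℝ → ℂ) x * 𝓕 g x := four_flip _ _ hsi hg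
    _ = ∫ x, 𝓕 (ψ : ℝ → ℂ) (-x) * 𝓕 g x := by rw [hneg]
    _ = ∫ x, 𝓕 (fun x => ψ (-x)) x * 𝓕 g x := by
        congr 1; ext x; congr 1
        rw [Real.fourier_real_eq_integral_exp_smul, Real.fourier_real_eq_integral_exp_smul,
          ← integral_neg_eq_self]
        simp
    _ = ∫ x, ψ (-x) * 𝓕 (𝓕 g) x := four_flip _ _ ψ.integrable.comp_neg hG
    _ = ∫ x, ψ x * 𝓕⁻ (𝓕 g) x := by
        rw [hneg, ← integral_neg_eq_self]
        simp

open scoped FourierTransform in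
theorem beurling_reformulated (g : ℝ → ℂ) (hg : Integrable g)
    (G : ℝ → ℂ)
    (hG : ∀ l : ℝ, G l = ∫ t : ℝ, g t * Complex.exp (-(Complex.I * l * t)))
    (M : ℝ → ENNReal)
    (hM : ∀ l : ℝ, M l = ∫⁻ x : ℝ, ENNReal.ofReal (‖g x‖ * Real.exp (|l| * |x|)))
    (h : (∫⁻ l : ℝ, M l * ENNReal.ofReal ‖G l‖) < ⊤) :
    g =ᵐ[volume] 0 := by
  by_contra hne
  have hpi : (0 : ℝ) < 2 * Real.pi := by positivity
  have hGF : ∀ l, G l = 𝓕 g (l * (2 * Real.pi)⁻¹) := by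
    intro l
    rw [hG, Real.fourier_real_eq_integral_exp_smul]
    congr 1; ext t
    rw [smul_eq_mul, mul_comm]
    congr 2
    push_cast
    have : (Real.pi : ℂ) ≠ 0 := by exact_mod_cast Real.pi_ne_zero
    field_simp
  have hGc : Continuous G := by
    have : G = fun l => 𝓕 g (l * (2 * Real.pi)⁻¹) := funext hGF
    rw [this]
    exact (continuous_four g hg).comp (by fun_prop)
  -- the transform is integrable
  have hGi : Integrable G := by
    refine ⟨hGc.aestronglyMeasurable, ?_⟩
    set c := ∫⁻ x, ‖g x‖ₑ with hc
    have hc0 : c ≠ 0 := by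
      rw [hc, Ne, lintegral_eq_zero_iff' hg.1.enorm]
      intro h0
      apply hne
      filter_upwards [h0] with x hx
      simpa using hx
    have hle : ∀ l, c * ‖G l‖ₑ ≤ M l * ENNReal.ofReal ‖G l‖ := by
      intro l
      rw [ofReal_norm, hM]
      gcongr
      refine lintegral_mono fun x => ?_
      rw [← ofReal_norm]
      apply ENNReal.ofReal_le_ofReal
      refine le_mul_of_one_le_right (norm_nonneg _) (Real.one_le_exp (by positivity))
    have h2 : c * ∫⁻ l, ‖G l‖ₑ < ⊤ := by
      rw [← lintegral_const_mul' _ _ hg.2.ne]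
      exact (lintegral_mono hle).trans_lt h
    exact ENNReal.lt_top_of_mul_ne_top_right h2.ne hc0
  have hFi : Integrable (𝓕 g) := by
    have := hGi.comp_mul_right' hpi.ne'
    refine this.congr (Filter.Eventually.of_forall fun l => ?_)
    simp only [hGF]
    congr 1
    field_simp
  have hinv := inversion_ae g hg hFi
  set u := 𝓕⁻ (𝓕 g) with hu
  have huc : Continuous u := by
    have : u = fun x => 𝓕 (𝓕 g) (-x) := by
      ext x; exact Real.fourierInv_eq_fourier_neg _ x
    rw [this]
    exact (continuous_four _ hFi).comp continuous_neg
  have hu0 : u = 0 := by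
    refine core u (fun y => ((2 * Real.pi)⁻¹ : ℝ) * G y) huc (by fun_prop) ?_ ?_
    · intro x
      rw [hu, Real.fourierInv_eq_fourier_neg, Real.fourier_real_eq_integral_exp_smul]
      have := Measure.integral_comp_mul_left
        (fun y : ℝ => G y * Complex.exp (Complex.I * x * y)) (2 * Real.pi)
      simp only [mul_assoc (((2 * Real.pi)⁻¹ : ℝ) : ℂ)]
      rw [integral_const_mul, ← abs_of_pos (inv_pos.2 hpi), ← Complex.real_smul, ← this]
      congr 1; ext y
      rw [hGF, smul_eq_mul, mul_comm]
      congr 2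
      · field_simp
      · push_cast; ring
    · have hm : AEStronglyMeasurable (fun p : ℝ × ℝ => ‖u p.1‖ * ‖G p.2‖ * Real.exp |p.1 * p.2|)
          (volume.prod volume) := Continuous.aestronglyMeasurable (by fun_prop)
      have hI : Integrable (fun p : ℝ × ℝ => ‖u p.1‖ * ‖G p.2‖ * Real.exp |p.1 * p.2|)
          (volume.prod volume) := by
        refine ⟨hm, ?_⟩
        rw [HasFiniteIntegral, lintegral_prod_symm _ hm.enorm]
        refine lt_of_eq_of_lt ?_ h
        congr 1; ext l
        rw [hM, ← lintegral_mul_const' _ _ ENNReal.ofReal_ne_top]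
        apply lintegral_congr_ae
        filter_upwards [hinv] with x hx
        rw [hx, ← ENNReal.ofReal_mul (by positivity), Real.enorm_of_nonneg (by positivity)]
        congr 1
        rw [abs_mul, mul_comm |x|]
        ring
      have := hI.const_mul ((2 * Real.pi)⁻¹)
      rw [Measure.volume_eq_prod]
      refine this.congr (Filter.Eventually.of_forall fun p => ?_)
      simp only [norm_mul, Complex.norm_real, Real.norm_eq_abs, abs_of_pos (inv_pos.2 hpi)]
      ring
  apply hne
  rw [← hu0]
  exact hinv
end

section
/- Let f ∈ L¹(ℝ), α, β > 0 with αβ > 1/4, and suppose |f(x)| ≤ C e^{-αx²} and |f̃(λ)| ≤ C e^{-βλ²} for all x, λ ∈ ℝ. Then f = 0 almost everywhere. -/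
open MeasureTheory Complex Set Filter Topology

lemma sector_bound (H : ℂ → ℂ) (hH : Differentiable ℂ H) (M γ a b : ℝ) (hM : 0 ≤ M) (hγ : 0 ≤ γ)
    (hab : a < b) (hab2 : b - a < Real.pi / 2)
    (hg : ∀ z, ‖H z‖ ≤ M * Real.exp (γ * ‖z‖ ^ 2))
    (ha : ∀ w : ℂ, w.im = a → ‖H (exp w)‖ ≤ M)
    (hb : ∀ w : ℂ, w.im = b → ‖H (exp w)‖ ≤ M) (w : ℂ) (h1 : a ≤ w.im) (h2 : w.im ≤ b) :
    ‖H (exp w)‖ ≤ M := by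
  refine PhragmenLindelof.horizontal_strip (f := fun w => H (exp w)) (a := a) (b := b)
    ?_ ?_ ha hb h1 h2
  · exact (hH.comp Complex.differentiable_exp).diffContOnCl
  · refine ⟨2, ?_, γ, ?_⟩
    · rw [lt_div_iff₀ (by linarith)]; linarith
    · refine Asymptotics.IsBigO.of_bound M (Eventually.of_forall fun z => ?_)
      refine (hg _).trans ?_
      rw [Real.norm_of_nonneg (Real.exp_nonneg _), Complex.norm_exp, ← Real.exp_nat_mul]
      have : (2:ℕ) * z.re ≤ 2 * |z.re| := by push_cast; linarith [le_abs_self z.re]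
      gcongr

lemma half_bound (H : ℂ → ℂ) (hH : Differentiable ℂ H) (M γ δ : ℝ) (hM : 0 ≤ M) (hγ : 0 < γ)
    (hδ : 0 < δ)
    (hg : ∀ z, ‖H z‖ ≤ M * Real.exp (γ * z.re ^ 2 - δ * z.im ^ 2))
    (hr : ∀ x : ℝ, ‖H x‖ ≤ M) (z : ℂ) (hz : 0 ≤ z.re) : ‖H z‖ ≤ M := by
  set c := √(δ / (γ + δ)) with hc
  have hc0 : 0 < c := Real.sqrt_pos.2 (by positivity)
  have hc2 : c ^ 2 = δ / (γ + δ) := Real.sq_sqrt (by positivity)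
  have hc2' : (γ + δ) * c ^ 2 = δ := by rw [hc2]; field_simp
  have hc1 : c < 1 := by
    by_contra! h
    have : 1 ≤ c ^ 2 := one_le_pow₀ h
    nlinarith
  set θ := Real.arccos c
  have hθ0 : 0 < θ := Real.arccos_pos.2 hc1
  have hθ1 : θ < Real.pi / 2 := Real.arccos_lt_pi_div_two.2 hc0
  have hcos : Real.cos θ = c := Real.cos_arccos (by linarith) hc1.le
  have hdir : ∀ z : ℂ, 0 ≤ z.re → z.re ≤ ‖z‖ * c → ‖H z‖ ≤ M := by
    intro z h0 h1
    refine (hg z).trans (mul_le_of_le_one_right hM (Real.exp_le_one_iff.2 ?_))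
    have h3 : ‖z‖ ^ 2 = z.re ^ 2 + z.im ^ 2 := by
      rw [Complex.sq_norm, Complex.normSq_apply]; ring
    have h4 : z.re ^ 2 ≤ ‖z‖ ^ 2 * c ^ 2 := by
      rw [← mul_pow]; exact pow_le_pow_left₀ h0 h1 2
    have h5 : (γ + δ) * z.re ^ 2 ≤ (γ + δ) * (‖z‖ ^ 2 * c ^ 2) := by gcongr
    have h6 : (γ + δ) * (‖z‖ ^ 2 * c ^ 2) = ‖z‖ ^ 2 * δ := by
      linear_combination ‖z‖ ^ 2 * hc2'
    rw [h6, h3] at h5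
    linarith
  have hg' : ∀ z, ‖H z‖ ≤ M * Real.exp (γ * ‖z‖ ^ 2) := by
    intro z
    refine (hg z).trans ?_
    have h3 : ‖z‖ ^ 2 = z.re ^ 2 + z.im ^ 2 := by
      rw [Complex.sq_norm, Complex.normSq_apply]; ring
    rw [h3]
    gcongr
    nlinarith [sq_nonneg z.im]
  have hray : ∀ w : ℂ, |w.im| = θ → ‖H (exp w)‖ ≤ M := by
    intro w hw
    have : Real.cos w.im = c := by rw [← Real.cos_abs, hw, hcos]
    apply hdir
    · rw [Complex.exp_re, this]; positivity
    · rw [Complex.exp_re, this, Complex.norm_exp]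
  have hzero : ∀ w : ℂ, w.im = 0 → ‖H (exp w)‖ ≤ M := by
    intro w hw
    have : w = (w.re : ℂ) := by apply Complex.ext <;> simp [hw]
    rw [this, ← Complex.ofReal_exp]; exact hr _
  by_cases h : z.re ≤ ‖z‖ * c
  · exact hdir z hz h
  have hz0 : z ≠ 0 := by rintro rfl; simp at h
  have harg : |arg z| < θ := by
    by_contra! h'
    apply h
    rw [← Complex.norm_mul_cos_arg, ← Real.cos_abs (arg z), ← hcos]
    gcongr
    exact Real.cos_le_cos_of_nonneg_of_le_pi hθ0.le (Complex.abs_arg_le_pi z) h'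
  rw [← Complex.exp_log hz0]
  rw [abs_lt] at harg
  rcases le_total 0 (arg z) with h0 | h0
  · exact sector_bound H hH M γ 0 θ hM hγ.le hθ0 (by linarith) hg' hzero
      (fun w hw => hray w (by rw [hw, abs_of_pos hθ0])) _ (by rwa [Complex.log_im])
      (by rw [Complex.log_im]; exact harg.2.le)
  · exact sector_bound H hH M γ (-θ) 0 hM hγ.le (by linarith) (by linarith) hg'
      (fun w hw => hray w (by rw [hw, abs_neg, abs_of_pos hθ0])) hzero _
      (by rw [Complex.log_im]; exact harg.1.le) (by rwa [Complex.log_im])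

lemma all_bound (H : ℂ → ℂ) (hH : Differentiable ℂ H) (M γ δ : ℝ) (hM : 0 ≤ M) (hγ : 0 < γ)
    (hδ : 0 < δ)
    (hg : ∀ z, ‖H z‖ ≤ M * Real.exp (γ * z.re ^ 2 - δ * z.im ^ 2))
    (hr : ∀ x : ℝ, ‖H x‖ ≤ M) (z : ℂ) : ‖H z‖ ≤ M := by
  rcases le_total 0 z.re with h | h
  · exact half_bound H hH M γ δ hM hγ hδ hg hr z h
  · have := half_bound (fun z => H (-z)) (hH.comp differentiable_neg) M γ δ hM hγ hδ
      (fun z => by simpa using hg (-z)) (fun x => by simpa using hr (-x)) (-z) (by simpa using h)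
    simpa using this

lemma entire_zero (F : ℂ → ℂ) (hF : Differentiable ℂ F) (M a β : ℝ) (ha : 0 < a) (hab : a < β)
    (hM : 0 ≤ M) (hg : ∀ z, ‖F z‖ ≤ M * Real.exp (a * z.im ^ 2))
    (hr : ∀ x : ℝ, ‖F x‖ ≤ M * Real.exp (-(β * x ^ 2))) (z : ℂ) : F z = 0 := by
  obtain ⟨γ, h1, h2⟩ := exists_between hab
  set H : ℂ → ℂ := fun z => F z * exp (γ * z ^ 2) with hHdef
  have hH : Differentiable ℂ H := by
    rw [hHdef]; fun_prop
  have hn : ∀ z : ℂ, ‖exp (γ * z ^ 2)‖ = Real.exp (γ * (z.re ^ 2 - z.im ^ 2)) := by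
    intro z
    rw [Complex.norm_exp, Complex.re_ofReal_mul, sq z, Complex.mul_re]; ring_nf
  have hHr : ∀ x : ℝ, ‖H x‖ ≤ M * Real.exp (-((β - γ) * x ^ 2)) := by
    intro x
    rw [hHdef]; simp only [norm_mul, hn]
    refine (mul_le_mul_of_nonneg_right (hr x) (Real.exp_nonneg _)).trans (le_of_eq ?_)
    rw [mul_assoc, ← Real.exp_add]; simp; left; ring
  have hb := all_bound H hH M γ (γ - a) hM (by linarith) (by linarith) (by
    intro z
    rw [hHdef]; simp only [norm_mul, hn]
    refine (mul_le_mul_of_nonneg_right (hg z) (Real.exp_nonneg _)).trans (le_of_eq ?_)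
    rw [mul_assoc, ← Real.exp_add]; ring_nf) (fun x => (hHr x).trans (mul_le_of_le_one_right hM
      (Real.exp_le_one_iff.2 (by nlinarith [sq_nonneg x]))))
  have hbd : Bornology.IsBounded (range H) := by
    rw [isBounded_iff_forall_norm_le]
    exact ⟨M, by rintro _ ⟨z, rfl⟩; exact hb z⟩
  have hlim : Tendsto (fun x : ℝ => M * Real.exp (-((β - γ) * x ^ 2))) atTop (𝓝 0) := by
    rw [← mul_zero M]
    refine Tendsto.const_mul _ (Real.tendsto_exp_neg_atTop_nhds_zero.comp ?_)
    exact (tendsto_pow_atTop two_ne_zero).const_mul_atTop (by linarith)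
  have h0 : ‖H z‖ ≤ 0 := ge_of_tendsto' hlim (fun x => by
    rw [hH.apply_eq_apply_of_bounded hbd z x]; exact hHr x)
  have := norm_le_zero_iff.1 h0
  simpa [hHdef] using this

lemma gauss_shift (α y t : ℝ) (hα : 0 < α) :
    Real.exp (-(α * t ^ 2)) * Real.exp (y * t) =
      Real.exp (y ^ 2 / (4 * α)) * Real.exp (-α * (t - y / (2 * α)) ^ 2) := by
  rw [← Real.exp_add, ← Real.exp_add]
  congr 1
  field_simp
  ring

lemma gauss_int (α y : ℝ) (hα : 0 < α) :
    Integrable (fun t : ℝ => Real.exp (-(α * t ^ 2)) * Real.exp (y * t)) := by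
  simp_rw [gauss_shift α y _ hα]
  exact ((integrable_exp_neg_mul_sq hα).comp_sub_right (y / (2 * α))).const_mul _

lemma gauss_val (α y : ℝ) (hα : 0 < α) :
    ∫ t : ℝ, Real.exp (-(α * t ^ 2)) * Real.exp (y * t) =
      √(Real.pi / α) * Real.exp (1 / (4 * α) * y ^ 2) := by
  simp_rw [gauss_shift α y _ hα]
  rw [integral_const_mul, integral_sub_right_eq_self (fun t : ℝ => Real.exp (-α * t ^ 2)),
    integral_gaussian, mul_comm]
  congr 2
  ring

lemma norm_ker (z : ℂ) (t : ℝ) : ‖exp (-(I * z * t))‖ = Real.exp (z.im * t) := by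
  rw [Complex.norm_exp]; simp

lemma abs_exp_le (r : ℝ) (t : ℝ) :
    Real.exp (r * |t|) ≤ Real.exp (r * t) + Real.exp (-r * t) := by
  rcases abs_cases t with ⟨h, _⟩ | ⟨h, _⟩ <;> rw [h]
  · linarith [Real.exp_nonneg (-r * t)]
  · rw [show r * -t = -r * t by ring]; linarith [Real.exp_nonneg (r * t)]

lemma ft_diff (f : ℝ → ℂ) (hf : Integrable f) (α C : ℝ) (hα : 0 < α) (hC : 0 ≤ C)
    (hfd : ∀ x : ℝ, ‖f x‖ ≤ C * Real.exp (-(α * x ^ 2))) :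
    Differentiable ℂ (fun z : ℂ => ∫ t : ℝ, f t * exp (-(I * z * t))) := by
  intro z
  set R := ‖z‖ + 1 with hR
  have hmeas : ∀ w : ℂ, AEStronglyMeasurable (fun t : ℝ => f t * exp (-(I * w * t))) volume :=
    fun w => hf.aestronglyMeasurable.mul (by fun_prop)
  have h := hasDerivAt_integral_of_dominated_loc_of_deriv_le (μ := volume) (𝕜 := ℂ)
    (F := fun (z : ℂ) (t : ℝ) => f t * exp (-(I * z * t))) (x₀ := z)
    (F' := fun (z : ℂ) (t : ℝ) => f t * (exp (-(I * z * t)) * (-(I * t))))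
    (s := Metric.ball z 1)
    (bound := fun t => C * (Real.exp (-(α * t ^ 2)) * Real.exp ((R + 1) * t) +
      Real.exp (-(α * t ^ 2)) * Real.exp (-(R + 1) * t)))
    (Metric.ball_mem_nhds z one_pos) (Eventually.of_forall hmeas) ?_ ?_ ?_ ?_ ?_
  · exact h.2.differentiableAt
  · refine ((gauss_int α z.im hα).const_mul C).mono' (hmeas z) (Eventually.of_forall fun t => ?_)
    rw [norm_mul, norm_ker, ← mul_assoc]
    gcongr
    exact hfd t
  · exact hf.aestronglyMeasurable.mul (by fun_prop)
  · refine Eventually.of_forall fun t w hw => ?_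
    have hwR : |w.im| ≤ R := by
      refine (Complex.abs_im_le_norm w).trans ?_
      have : ‖w - z‖ < 1 := by simpa [dist_eq_norm] using hw
      have h2 : ‖w‖ ≤ ‖w - z‖ + ‖z‖ := by simpa using norm_add_le (w - z) z
      linarith
    have h1 : w.im * t ≤ R * |t| := by
      refine (le_abs_self _).trans ?_
      rw [abs_mul]; gcongr
    have h2 : |t| ≤ Real.exp |t| := by linarith [Real.add_one_le_exp |t|]
    have h3 : Real.exp (w.im * t) * |t| ≤ Real.exp ((R + 1) * t) + Real.exp (-(R + 1) * t) := by
      refine le_trans ?_ (abs_exp_le (R + 1) t)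
      rw [add_mul, Real.exp_add, one_mul]
      gcongr
    rw [norm_mul, norm_mul, norm_ker]
    have h4 : ‖-(I * (t : ℂ))‖ = |t| := by simp
    rw [h4, ← mul_add, ← mul_assoc C]
    exact mul_le_mul (hfd t) h3 (by positivity) (by positivity)
  · exact ((gauss_int α _ hα).add (gauss_int α _ hα)).const_mul C
  · refine Eventually.of_forall fun t w _ => ?_
    have : HasDerivAt (fun w : ℂ => -(I * w * t)) (-(I * t)) w := by
      have h0 := (((hasDerivAt_id w).const_mul I).mul_const (t : ℂ)).neg
      rw [mul_one] at h0
      exact h0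
    exact this.cexp.const_mul (f t)

lemma ft_bound (f : ℝ → ℂ) (α C : ℝ) (hα : 0 < α)
    (hfd : ∀ x : ℝ, ‖f x‖ ≤ C * Real.exp (-(α * x ^ 2))) (z : ℂ) :
    ‖∫ t : ℝ, f t * exp (-(I * z * t))‖ ≤
      C * √(Real.pi / α) * Real.exp (1 / (4 * α) * z.im ^ 2) := by
  rw [mul_assoc, ← gauss_val α _ hα, ← integral_const_mul]
  refine norm_integral_le_of_norm_le ((gauss_int α z.im hα).const_mul C)
    (Eventually.of_forall fun t => ?_)
  rw [norm_mul, norm_ker, ← mul_assoc]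
  gcongr
  exact hfd t

open FourierTransform ContDiff in
lemma ft_inj (f : ℝ → ℂ) (hf : Integrable f) (h : ∀ w : ℝ, 𝓕 f w = 0) : f =ᵐ[volume] 0 := by
  refine ae_eq_zero_of_integral_contDiff_smul_eq_zero hf.locallyIntegrable fun g hg hgs => ?_
  have hs : HasCompactSupport (fun x => (g x : ℂ)) := hgs.comp_left Complex.ofReal_zero
  set G := hs.toSchwartzMap (Complex.ofRealCLM.contDiff.comp hg) with hG
  set K : SchwartzMap ℝ ℂ := 𝓕⁻ G with hK
  have h1 : ∀ x, (𝓕 (⇑K) : ℝ → ℂ) x = (g x : ℂ) := by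
    intro x
    rw [← SchwartzMap.fourier_coe, hK, FourierTransform.fourier_fourierInv_eq]
    rfl
  have h2 := VectorFourier.integral_fourierIntegral_smul_eq_flip (L := innerₗ ℝ) (μ := volume)
    (ν := volume) (f := ⇑K) (g := f) (e := Real.fourierChar) Real.continuous_fourierChar
    continuous_inner K.integrable hf
  have h3 : ∀ x, VectorFourier.fourierIntegral Real.fourierChar volume (innerₗ ℝ) (⇑K) x
    = (g x : ℂ) := h1
  have h4 : ∀ x, VectorFourier.fourierIntegral Real.fourierChar volume (innerₗ ℝ).flip f x
    = 0 := by
    intro x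
    rw [flip_innerₗ]; exact h x
  simp_rw [h3, h4] at h2
  simpa using h2

theorem hardy_theorem_R (f : ℝ → ℂ) (hf : Integrable f)
    (F : ℝ → ℂ)
    (hF : ∀ l : ℝ, F l = ∫ t : ℝ, f t * Complex.exp (-(Complex.I * l * t)))
    (α β C : ℝ) (hα : 0 < α) (hβ : 0 < β) (hαβ : 1 / 4 < α * β)
    (hfd : ∀ x : ℝ, ‖f x‖ ≤ C * Real.exp (-(α * x ^ 2)))
    (hFd : ∀ l : ℝ, ‖F l‖ ≤ C * Real.exp (-(β * l ^ 2))) :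
    f =ᵐ[volume] 0 := by
  have hC : 0 ≤ C := by simpa using (norm_nonneg _).trans (hfd 0)
  have key := entire_zero _ (ft_diff f hf α C hα hC hfd) (max C (C * √(Real.pi / α)))
    (1 / (4 * α)) β (by positivity) (by rw [div_lt_iff₀ (by positivity)]; linarith)
    (le_max_of_le_left hC)
    (fun z => (ft_bound f α C hα hfd z).trans (by gcongr; exact le_max_right _ _))
    (fun x => by
      rw [← hF x]
      exact (hFd x).trans (by gcongr; exact le_max_left _ _))
  apply ft_inj f hf
  intro w
  rw [Real.fourier_real_eq_integral_exp_smul, ← key ((2 * Real.pi * w : ℝ) : ℂ)]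
  congr 1
  ext t
  rw [smul_eq_mul, mul_comm]
  congr 2
  push_cast
  ring
end

section
/- Let f ∈ L¹(ℝ), 1 < p < ∞, 1/p + 1/q = 1, α, β > 0 with αβ ≥ 1. Suppose ∫_ℝ |f(x)| e^{(α|x|)^p / p} dx < ∞ and ∫_ℝ |f̃(λ)| e^{(β|λ|)^q / q} dλ < ∞. Then f = 0 almost everywhere. -/
open MeasureTheory

/-- radial primitive -/
noncomputable def radPrim (h : ℂ → ℂ) (z : ℂ) : ℂ := z * ∫ t in (0:ℝ)..1, h (t * z)

lemma radPrim_hasDerivAt (h : ℂ → ℂ) (hh : Differentiable ℂ h) (z : ℂ) :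
    HasDerivAt (radPrim h) (h z) z := by
  obtain ⟨P, hP⟩ := (hh.differentiableOn (s := Metric.ball 0 (‖z‖ + 1))).isExactOn_ball
  have key : ∀ w ∈ Metric.ball (0:ℂ) (‖z‖ + 1), radPrim h w = P w - P 0 := by
    intro w hw
    have hd : ∀ t ∈ Set.uIcc (0:ℝ) 1,
        HasDerivAt (fun t : ℝ => P ((t:ℂ) * w)) (h (t * w) * w) t := by
      intro t ht
      rw [Set.uIcc_of_le zero_le_one] at ht
      have h1 : (t:ℂ) * w ∈ Metric.ball (0:ℂ) (‖z‖ + 1) := by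
        simp only [mem_ball_zero_iff, norm_mul, Complex.norm_real, Real.norm_eq_abs,
          abs_of_nonneg ht.1] at hw ⊢
        nlinarith [norm_nonneg w, ht.1, ht.2]
      have h2 : HasDerivAt (fun s : ℂ => s * w) w (t:ℂ) := by
        simpa using (hasDerivAt_id (t:ℂ)).mul_const w
      exact (HasDerivAt.comp (t:ℂ) (h₂ := P) (h := fun s : ℂ => s * w) (hP _ h1) h2).comp_ofReal
    have := intervalIntegral.integral_eq_sub_of_hasDerivAt hd
      ((by have := hh.continuous; fun_prop : Continuous fun t : ℝ => h (t * w) * w).intervalIntegrable _ _)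
    rw [intervalIntegral.integral_mul_const] at this
    simp only [Complex.ofReal_one, one_mul, Complex.ofReal_zero, zero_mul] at this
    rw [radPrim, mul_comm, this]
  have hz : z ∈ Metric.ball (0:ℂ) (‖z‖ + 1) := by simp
  refine ((hP z hz).sub_const (P 0)).congr_of_eventuallyEq ?_
  filter_upwards [Metric.isOpen_ball.mem_nhds hz] with w hw using key w hw

/-- bound on a ray -/
lemma radPrim_ray (h : ℂ → ℂ) (hh : Differentiable ℂ h) (u : ℂ) (hu : ‖u‖ = 1) (m : ℝ → ℝ)
    (hm : Integrable m) (hm0 : ∀ t, 0 ≤ m t) (hb : ∀ t : ℝ, 0 ≤ t → ‖h (t * u)‖ ≤ m t) (r : ℝ) (hr : 0 ≤ r) :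
    ‖radPrim h (r * u)‖ ≤ ∫ t, m t := by
  have hc := hh.continuous
  have e1 : (r:ℂ) * ∫ t in (0:ℝ)..1, h (t * (r * u)) = ∫ t in (0:ℝ)..r, h (t * u) := by
    have := intervalIntegral.smul_integral_comp_mul_right (a := 0) (b := 1) (fun t : ℝ => h (t * u)) r
    simp only [zero_mul, one_mul] at this
    rw [← this, Complex.real_smul]
    congr 2; ext t; push_cast; ring_nf
  have e2 : radPrim h (r * u) = u * ∫ t in (0:ℝ)..r, h (t * u) := by
    rw [← e1, radPrim]; ring
  rw [e2, norm_mul, hu, one_mul]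
  calc _ ≤ ∫ t in (0:ℝ)..r, ‖h (t * u)‖ := intervalIntegral.norm_integral_le_integral_norm hr
    _ ≤ ∫ t in (0:ℝ)..r, m t := by
      apply intervalIntegral.integral_mono_on hr
      · exact (by fun_prop : Continuous fun t : ℝ => ‖h (t * u)‖).intervalIntegrable _ _
      · exact hm.intervalIntegrable
      · intro t ht; exact hb t ht.1
    _ ≤ _ := by
      rw [intervalIntegral.integral_of_le hr]
      exact setIntegral_le_integral hm (Filter.Eventually.of_forall hm0)

lemma radPrim_growth (h : ℂ → ℂ) (A B : ℝ) (hA : 0 ≤ A) (hB : 0 ≤ B)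
    (hb : ∀ z, ‖h z‖ ≤ A * Real.exp (B * ‖z‖ ^ 2)) (z : ℂ) :
    ‖radPrim h z‖ ≤ A * Real.exp ((B + 1) * ‖z‖ ^ 2) := by
  have : ‖∫ t in (0:ℝ)..1, h (t * z)‖ ≤ A * Real.exp (B * ‖z‖ ^ 2) * |1 - 0| := by
    apply intervalIntegral.norm_integral_le_of_norm_le_const
    intro t ht
    rw [Set.uIoc_of_le zero_le_one] at ht
    refine (hb _).trans ?_
    gcongr
    rw [norm_mul, Complex.norm_real, Real.norm_eq_abs, abs_of_pos ht.1]
    nlinarith [norm_nonneg z, ht.1, ht.2]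
  rw [radPrim, norm_mul, add_mul, Real.exp_add]
  have h2 : ‖z‖ ≤ Real.exp (1 * ‖z‖ ^ 2) := by
    nlinarith [Real.add_one_le_exp (1 * ‖z‖ ^ 2), sq_nonneg (‖z‖ - 1)]
  simp only [sub_zero, abs_one, mul_one] at this
  calc _ ≤ Real.exp (1 * ‖z‖ ^ 2) * (A * Real.exp (B * ‖z‖ ^ 2)) := by gcongr
    _ = _ := by ring

/-- tilted bound -/
lemma sector_bound_s9 (a b : ℂ → ℂ) (ha : Differentiable ℂ a) (hb : Differentiable ℂ b)
    (M : ℝ → ℝ) (hM : MonotoneOn M (Set.Ici 0)) (A B : ℝ) (hA : 0 ≤ A) (hB : 0 ≤ B)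
    (hMg : ∀ t, 0 ≤ t → M t ≤ A * Real.exp (B * t ^ 2))
    (haM : ∀ z, ‖a z‖ ≤ M |z.im|) (hbM : ∀ z, ‖b z‖ ≤ M |z.im|)
    (hai : Integrable (fun x : ℝ => ‖a x‖ * M |x|)) (hbi : Integrable (fun x : ℝ => ‖b (-x)‖ * M |x|))
    (C : ℝ) (hCa : ∫ x : ℝ, ‖a x‖ * M |x| ≤ C) (hCb : ∫ x : ℝ, ‖b (-x)‖ * M |x| ≤ C)
    (r φ θ : ℝ) (hr : 0 < r) (h0 : 0 < θ) (hθ : θ ≤ φ) (hφ : φ ≤ Real.pi / 2) (hθ2 : θ < Real.pi / 2):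
    ‖radPrim (fun u => a (Complex.exp (-(θ * Complex.I)) * u) * b (Complex.I * u))
      (r * Complex.exp (φ * Complex.I))‖ ≤ C := by
  have hM0 : ∀ t, 0 ≤ t → 0 ≤ M t := fun t ht => by
    have := (norm_nonneg _).trans (haM (t * Complex.I))
    simpa [abs_of_nonneg ht] using this
  set h : ℂ → ℂ := fun u => a (Complex.exp (-(θ * Complex.I)) * u) * b (Complex.I * u) with hh
  have hd : Differentiable ℂ h := by fun_prop
  have hag : ∀ z, ‖a z‖ ≤ A * Real.exp (B * ‖z‖ ^ 2) := fun z =>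
    (haM z).trans ((hMg _ (abs_nonneg _)).trans (by gcongr; exact Complex.abs_im_le_norm z))
  have hbg : ∀ z, ‖b z‖ ≤ A * Real.exp (B * ‖z‖ ^ 2) := fun z =>
    (hbM z).trans ((hMg _ (abs_nonneg _)).trans (by gcongr; exact Complex.abs_im_le_norm z))
  have hne : ‖Complex.exp (-(θ * Complex.I))‖ = 1 := by
    rw [← neg_mul, ← Complex.ofReal_neg, Complex.norm_exp_ofReal_mul_I]
  have hgr : ∀ z, ‖radPrim h z‖ ≤ A * A * Real.exp ((2 * B + 1) * ‖z‖ ^ 2) := by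
    apply radPrim_growth h (A * A) (2 * B) (by positivity) (by positivity)
    intro z
    have h1 := hag (Complex.exp (-(θ * Complex.I)) * z)
    have h2 := hbg (Complex.I * z)
    rw [norm_mul, hne, one_mul] at h1
    rw [norm_mul, Complex.norm_I, one_mul] at h2
    calc ‖h z‖ ≤ (A * Real.exp (B * ‖z‖ ^ 2)) * (A * Real.exp (B * ‖z‖ ^ 2)) := by
          rw [hh, norm_mul]; gcongr
      _ = _ := by rw [show 2 * B * ‖z‖^2 = B * ‖z‖^2 + B * ‖z‖^2 by ring, Real.exp_add]; ring
  have hG : Differentiable ℂ (radPrim h) := fun z => (radPrim_hasDerivAt h hd z).differentiableAt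
  have hmono : ∀ z : ℂ, ∀ t : ℝ, 0 ≤ t → ‖z‖ = t → M |z.im| ≤ M |t| := fun z t ht hz =>
    hM (Set.mem_Ici.2 (abs_nonneg _)) (Set.mem_Ici.2 (abs_nonneg _))
      (by rw [abs_of_nonneg ht, ← hz]; exact Complex.abs_im_le_norm z)
  have key := PhragmenLindelof.horizontal_strip (a := θ) (b := Real.pi / 2) (C := C)
    (f := fun w => radPrim h (Complex.exp w)) (z := (Real.log r : ℂ) + φ * Complex.I)
    (Differentiable.diffContOnCl (by fun_prop)) ?_ ?_ ?_ (by simpa using hθ) (by simpa using hφ)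
  · rwa [Complex.exp_add, ← Complex.ofReal_exp, Real.exp_log hr] at key
  · refine ⟨2, ?_, 2 * B + 1, ?_⟩
    · rw [lt_div_iff₀ (by linarith)]; linarith
    · apply Asymptotics.IsBigO.of_bound (A * A)
      refine Filter.Eventually.of_forall fun w => ?_
      refine (hgr _).trans ?_
      rw [Real.norm_eq_abs, Real.abs_exp]
      gcongr
      rw [Complex.norm_exp, ← Real.exp_nat_mul]
      apply Real.exp_le_exp.2
      push_cast
      linarith [le_abs_self w.re]
  · intro w hw
    have : Complex.exp w = (Real.exp w.re : ℝ) * Complex.exp (θ * Complex.I) := by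
      rw [Complex.ofReal_exp, ← Complex.exp_add, ← hw, Complex.re_add_im]
    simp only [this]
    refine (radPrim_ray h hd _ (Complex.norm_exp_ofReal_mul_I θ) _ hai
      (fun t => mul_nonneg (norm_nonneg _) (hM0 _ (abs_nonneg _))) ?_ _ (Real.exp_pos _).le).trans hCa
    intro t ht
    have e : Complex.exp (-(θ * Complex.I)) * (t * Complex.exp (θ * Complex.I)) = t := by
      rw [mul_left_comm, ← Complex.exp_add]; simp
    simp only [hh, e, norm_mul]
    gcongr
    refine (hbM _).trans (hmono _ t ht ?_)
    simp [Complex.norm_exp_ofReal_mul_I, abs_of_nonneg ht]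
  · intro w hw
    have : Complex.exp w = (Real.exp w.re : ℝ) * Complex.I := by
      conv_lhs => rw [← Complex.re_add_im w, hw, Complex.exp_add]
      rw [Complex.ofReal_exp]; push_cast; rw [Complex.exp_pi_div_two_mul_I]
    simp only [this]
    refine (radPrim_ray h hd _ Complex.norm_I _ hbi
      (fun t => mul_nonneg (norm_nonneg _) (hM0 _ (abs_nonneg _))) ?_ _ (Real.exp_pos _).le).trans hCb
    intro t ht
    have e : Complex.I * (t * Complex.I) = -t := by
      rw [mul_left_comm, Complex.I_mul_I]; simp
    simp only [hh, e, norm_mul]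
    rw [mul_comm]
    gcongr
    refine (haM _).trans (hmono _ t ht ?_)
    rw [norm_mul, hne]
    simp [abs_of_nonneg ht]

lemma quadrant_bound (a b : ℂ → ℂ) (ha : Differentiable ℂ a) (hb : Differentiable ℂ b)
    (M : ℝ → ℝ) (hM : MonotoneOn M (Set.Ici 0)) (A B : ℝ) (hA : 0 ≤ A) (hB : 0 ≤ B)
    (hMg : ∀ t, 0 ≤ t → M t ≤ A * Real.exp (B * t ^ 2))
    (haM : ∀ z, ‖a z‖ ≤ M |z.im|) (hbM : ∀ z, ‖b z‖ ≤ M |z.im|)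
    (hai : Integrable (fun x : ℝ => ‖a x‖ * M |x|)) (hbi : Integrable (fun x : ℝ => ‖b (-x)‖ * M |x|))
    (C : ℝ) (hCa : ∫ x : ℝ, ‖a x‖ * M |x| ≤ C) (hCb : ∫ x : ℝ, ‖b (-x)‖ * M |x| ≤ C)
    (z : ℂ) (hre : 0 ≤ z.re) (him : 0 < z.im) :
    ‖radPrim (fun u => a u * b (Complex.I * u)) z‖ ≤ C := by
  have hz : z = (‖z‖ : ℝ) * Complex.exp (z.arg * Complex.I) := (Complex.norm_mul_exp_arg_mul_I z).symm
  have hz0 : z ≠ 0 := by rintro rfl; simp at him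
  have harg0 : 0 < z.arg := by
    rcases (Complex.arg_nonneg_iff.2 him.le).eq_or_lt with h | h
    · have := (Complex.arg_eq_zero_iff.1 h.symm).2; linarith
    · exact h
  have harg1 : z.arg ≤ Real.pi / 2 := Complex.arg_le_pi_div_two_iff.2 (Or.inl hre)
  have hcont : Continuous fun θ : ℝ => radPrim (fun u => a (Complex.exp (-(θ * Complex.I)) * u) * b (Complex.I * u)) z := by
    unfold radPrim
    refine continuous_const.mul ?_
    apply intervalIntegral.continuous_parametric_intervalIntegral_of_continuous'
    have := ha.continuous
    have := hb.continuous
    simp only [Function.uncurry_def]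
    fun_prop
  have ht : Filter.Tendsto (fun θ : ℝ => ‖radPrim (fun u => a (Complex.exp (-(θ * Complex.I)) * u) * b (Complex.I * u)) z‖)
      (nhdsWithin 0 (Set.Ioi 0)) (nhds ‖radPrim (fun u => a u * b (Complex.I * u)) z‖) := by
    have := (hcont.norm.tendsto 0).mono_left (nhdsWithin_le_nhds (s := Set.Ioi 0))
    simpa using this
  refine le_of_tendsto ht ?_
  filter_upwards [Ioo_mem_nhdsGT harg0] with θ hθ
  rw [hz]
  exact sector_bound_s9 a b ha hb M hM A B hA hB hMg haM hbM hai hbi C hCa hCb _ _ θ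
    (norm_pos_iff.2 hz0) hθ.1 hθ.2.le harg1 (hθ.2.trans_le harg1)

lemma radPrim_mul (h : ℂ → ℂ) (c z : ℂ) : radPrim h (c * z) = c * radPrim (fun u => h (c * u)) z := by
  unfold radPrim
  rw [mul_assoc]; congr 3; ext t; congr 1; ring

theorem core_s9 (g : ℂ → ℂ) (hg : Differentiable ℂ g)
    (M : ℝ → ℝ) (hM : MonotoneOn M (Set.Ici 0)) (A B : ℝ) (hA : 0 ≤ A) (hB : 0 ≤ B)
    (hMg : ∀ t, 0 ≤ t → M t ≤ A * Real.exp (B * t ^ 2))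
    (hgM : ∀ z, ‖g z‖ ≤ M |z.im|)
    (hgi : Integrable (fun x : ℝ => ‖g x‖ * M |x|)) (z : ℂ) : g z = 0 := by
  set C := ∫ x : ℝ, ‖g x‖ * M |x| with hC
  let k : ℂ → ℂ := fun z => g (-z)
  have hk : Differentiable ℂ k := by fun_prop
  have hkM : ∀ z, ‖k z‖ ≤ M |z.im| := fun z => by simpa using hgM (-z)
  have hki : Integrable (fun x : ℝ => ‖g (-x)‖ * M |x|) := by simpa using hgi.comp_neg
  have hkC : ∫ x : ℝ, ‖g (-x)‖ * M |x| = C := by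
    rw [hC, ← integral_neg_eq_self]; simp
  have hbound : ∀ z, ‖radPrim (fun u => g u * g (Complex.I * u)) z‖ ≤ C := by
    intro z
    by_cases hz : z = 0
    · have hM0 : 0 ≤ C := integral_nonneg fun t => by
        have := (norm_nonneg _).trans (hgM (t * Complex.I))
        exact mul_nonneg (norm_nonneg _) (by simpa using this)
      simpa [hz, radPrim] using hM0
    have cases : (0 ≤ z.re ∧ 0 < z.im) ∨ (z.re < 0 ∧ 0 ≤ z.im) ∨ (z.re ≤ 0 ∧ z.im < 0) ∨ (0 < z.re ∧ z.im ≤ 0) := by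
      have : z.re ≠ 0 ∨ z.im ≠ 0 := by
        by_contra! h; exact hz (Complex.ext h.1 h.2)
      grind
    rcases cases with h | h | h | h
    · exact quadrant_bound g g hg hg M hM A B hA hB hMg hgM hgM hgi hki C le_rfl hkC.le z h.1 h.2
    · have := quadrant_bound k g hk hg M hM A B hA hB hMg hkM hgM hki hki C hkC.le hkC.le (-Complex.I * z)
        (by simpa using h.2) (by simpa using h.1)
      rw [show z = Complex.I * (-Complex.I * z) by rw [← mul_assoc]; simp, radPrim_mul, norm_mul, Complex.norm_I, one_mul]
      refine le_of_eq_of_le ?_ this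
      congr 2; ext u; simp only [k]; rw [mul_comm, ← mul_assoc]; simp
    · have := quadrant_bound k k hk hk M hM A B hA hB hMg hkM hkM hki (by simpa [k] using hgi) C hkC.le (by simp [k, hC]) (-z)
        (by simpa using h.1) (by simpa using h.2)
      rw [show z = (-1) * (-z) by ring, radPrim_mul, norm_mul, norm_neg, norm_one, one_mul]
      refine le_of_eq_of_le ?_ this
      congr 2; ext u; simp only [k]; ring_nf
    · have := quadrant_bound g k hg hk M hM A B hA hB hMg hgM hkM hgi (by simpa [k] using hgi) C le_rfl (by simp [k, hC]) (Complex.I * z)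
        (by simpa using h.2) (by simpa using h.1)
      rw [show z = -Complex.I * (Complex.I * z) by rw [← mul_assoc]; simp, radPrim_mul, norm_mul, norm_neg, Complex.norm_I, one_mul]
      refine le_of_eq_of_le ?_ this
      congr 2; ext u; simp only [k]; rw [mul_comm, ← mul_assoc]; simp
  have hdh : Differentiable ℂ (fun u => g u * g (Complex.I * u)) := by fun_prop
  have hD := radPrim_hasDerivAt _ hdh
  have hbdd : Bornology.IsBounded (Set.range (radPrim (fun u => g u * g (Complex.I * u)))) := by
    rw [isBounded_iff_forall_norm_le]
    exact ⟨C, by rintro _ ⟨w, rfl⟩; exact hbound w⟩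
  have hconst := fun w => Differentiable.apply_eq_apply_of_bounded (fun z => (hD z).differentiableAt) hbdd w 0
  have hprod : ∀ u, g u * g (Complex.I * u) = 0 := fun u => by
    have h1 := hD u
    rw [funext hconst] at h1
    exact h1.unique (hasDerivAt_const u _)
  have h3 := AnalyticOnNhd.eq_zero_or_eq_zero_of_mul_eq_zero (U := Set.univ) (𝕜 := ℂ) (f := g) (g := fun u => g (Complex.I * u))
    (fun z _ => hg.analyticAt z) (fun z _ => (by fun_prop : Differentiable ℂ fun u => g (Complex.I * u)).analyticAt z)
    (fun u _ => hprod u) isPreconnected_univ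
  rcases h3 with h | h
  · exact h z trivial
  · have := h (-Complex.I * z) trivial
    rwa [← mul_assoc, show Complex.I * -Complex.I = 1 by simp, one_mul] at this

/-- Fourier-Laplace transform -/
noncomputable def flt (φ : ℝ → ℂ) (z : ℂ) : ℂ := ∫ x : ℝ, φ x * Complex.exp (Complex.I * z * x)

lemma norm_cexp_le (z : ℂ) (x : ℝ) : ‖Complex.exp (Complex.I * z * x)‖ ≤ Real.exp (|z.im| * |x|) := by
  rw [Complex.norm_exp]
  gcongr
  have : (Complex.I * z * x).re = -(z.im * x) := by simp
  rw [this, ← abs_mul]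
  exact neg_le_abs _

lemma flt_differentiable (φ : ℝ → ℂ) (hφ : AEStronglyMeasurable φ)
    (hi : ∀ c : ℝ, Integrable (fun x : ℝ => ‖φ x‖ * Real.exp (c * |x|))) : Differentiable ℂ (flt φ) := by
  intro z
  have hm : ∀ w : ℂ, AEStronglyMeasurable (fun x : ℝ => φ x * Complex.exp (Complex.I * w * x)) := fun w =>
    hφ.mul (by fun_prop : Continuous fun x : ℝ => Complex.exp (Complex.I * w * x)).aestronglyMeasurable
  have := hasDerivAt_integral_of_dominated_loc_of_deriv_le (𝕜 := ℂ) (μ := (volume : Measure ℝ)) (x₀ := z)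
    (F := fun w x => φ x * Complex.exp (Complex.I * w * x))
    (F' := fun w x => φ x * (Complex.exp (Complex.I * w * x) * (Complex.I * x)))
    (bound := fun x => ‖φ x‖ * Real.exp ((‖z‖ + 2) * |x|))
    (Metric.ball_mem_nhds z one_pos) (Filter.Eventually.of_forall hm) ?_ ?_ ?_ (hi _) ?_
  · exact this.2.differentiableAt
  · refine (hi |z.im|).mono' (hm z) (Filter.Eventually.of_forall fun x => ?_)
    rw [norm_mul]
    gcongr
    exact norm_cexp_le z x
  · exact hφ.mul (by fun_prop : Continuous fun x : ℝ => Complex.exp (Complex.I * z * x) * (Complex.I * x)).aestronglyMeasurable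
  · refine Filter.Eventually.of_forall fun x w hw => ?_
    rw [norm_mul]
    gcongr
    rw [norm_mul, norm_mul, Complex.norm_I, one_mul, Complex.norm_real, Real.norm_eq_abs]
    have h1 : |w.im| ≤ ‖z‖ + 1 := by
      have h2 : ‖w - z‖ < 1 := by simpa [dist_eq_norm] using hw
      have h3 : ‖w‖ ≤ ‖z‖ + ‖w - z‖ := by simpa using norm_add_le z (w - z)
      linarith [Complex.abs_im_le_norm w]
    calc _ ≤ Real.exp ((‖z‖ + 1) * |x|) * Real.exp |x| := by
          gcongr
          · refine (norm_cexp_le w x).trans ?_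
            gcongr
          · linarith [Real.add_one_le_exp |x|]
      _ = _ := by rw [← Real.exp_add]; ring_nf
  · refine Filter.Eventually.of_forall fun x w _ => ?_
    have h1 : HasDerivAt (fun w : ℂ => Complex.I * w * x) (Complex.I * x) w := by
      simpa using ((hasDerivAt_id w).const_mul Complex.I).mul_const (x:ℂ)
    exact h1.cexp.const_mul _

lemma young_exp {p q k : ℝ} (hpq : p.HolderConjugate q) (hk : 0 < k) (c x : ℝ) (hc : 0 ≤ c) (hx : 0 ≤ x) :
    Real.exp (c * x) ≤ Real.exp ((c / k) ^ q / q) * Real.exp ((k * x) ^ p / p) := by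
  rw [← Real.exp_add]
  gcongr
  have := Real.young_inequality_of_nonneg (a := k * x) (b := c / k) (by positivity) (by positivity) hpq
  have e : k * x * (c / k) = c * x := by field_simp
  linarith

lemma int_exp (φ : ℝ → ℂ) (hφ : AEStronglyMeasurable φ) {p q k : ℝ} (hpq : p.HolderConjugate q) (hk : 0 < k)
    (h1 : Integrable (fun x : ℝ => ‖φ x‖ * Real.exp ((k * |x|) ^ p / p))) (c : ℝ) :
    Integrable (fun x : ℝ => ‖φ x‖ * Real.exp (c * |x|)) := by
  refine (h1.const_mul (Real.exp ((|c| / k) ^ q / q))).mono'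
    (hφ.norm.mul (by fun_prop : Continuous fun x : ℝ => Real.exp (c * |x|)).aestronglyMeasurable)
    (Filter.Eventually.of_forall fun x => ?_)
  rw [Real.norm_of_nonneg (by positivity)]
  have := young_exp hpq hk |c| |x| (abs_nonneg _) (abs_nonneg _)
  have h2 : Real.exp (c * |x|) ≤ Real.exp (|c| * |x|) := by gcongr; exact le_abs_self c
  calc _ ≤ ‖φ x‖ * (Real.exp ((|c| / k) ^ q / q) * Real.exp ((k * |x|) ^ p / p)) := by
        gcongr; exact h2.trans this
    _ = _ := by ring

lemma half (φ : ℝ → ℂ) (hφ : AEStronglyMeasurable φ) {p q k k' : ℝ} (hpq : p.HolderConjugate q)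
    (hq1 : 1 < q) (hq2 : q ≤ 2) (hk : 0 < k) (hk' : 0 < k') (hkk : 1 ≤ k * k')
    (h1 : Integrable (fun x : ℝ => ‖φ x‖ * Real.exp ((k * |x|) ^ p / p)))
    (h2 : Integrable (fun x : ℝ => ‖flt φ x‖ * Real.exp ((k' * |x|) ^ q / q))) (z : ℂ) : flt φ z = 0 := by
  set K := ∫ x : ℝ, ‖φ x‖ * Real.exp ((k * |x|) ^ p / p) with hK
  have hK0 : 0 ≤ K := integral_nonneg fun x => by positivity
  have hi := int_exp φ hφ hpq hk h1
  refine core_s9 (flt φ) (flt_differentiable φ hφ hi) (fun t => K * Real.exp ((k' * t) ^ q / q)) ?_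
    (K * Real.exp 1) (k' ^ 2) (by positivity) (by positivity) ?_ ?_ ?_ z
  · intro s hs t _ hst
    have hs' : 0 ≤ s := hs
    simp only
    gcongr
  · intro t ht
    rw [mul_assoc, ← Real.exp_add]
    gcongr
    have h0 : 0 ≤ k' * t := by positivity
    have h3 : (k' * t) ^ q / q ≤ (k' * t) ^ q := div_le_self (by positivity) hq1.le
    have h4 : (k' * t) ^ q ≤ 1 + (k' * t) ^ 2 := by
      rcases le_total (k' * t) 1 with h | h
      · have := Real.rpow_le_one h0 h (by linarith : 0 ≤ q)
        nlinarith [sq_nonneg (k' * t)]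
      · have := Real.rpow_le_rpow_of_exponent_le h hq2
        rw [Real.rpow_two] at this
        linarith
    nlinarith
  · intro w
    have hle : |w.im| / k ≤ k' * |w.im| := by
      rw [div_le_iff₀ hk]; nlinarith [abs_nonneg w.im]
    calc ‖flt φ w‖ ≤ ∫ x : ℝ, (‖φ x‖ * Real.exp ((k * |x|) ^ p / p)) * Real.exp ((k' * |w.im|) ^ q / q) := by
          refine norm_integral_le_of_norm_le (h1.mul_const _) (Filter.Eventually.of_forall fun x => ?_)
          rw [norm_mul, mul_assoc ‖φ x‖]
          refine mul_le_mul_of_nonneg_left ?_ (norm_nonneg _)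
          refine (norm_cexp_le w x).trans ((young_exp hpq hk _ _ (abs_nonneg _) (abs_nonneg _)).trans ?_)
          rw [mul_comm]
          gcongr
      _ = _ := by rw [integral_mul_const]
  · refine (h2.const_mul K).congr (Filter.Eventually.of_forall fun x => ?_)
    simp only; ring

open FourierTransform Real in
lemma fourier_inversion_ae (f : ℝ → ℂ) (hf : Integrable f) (hF : Integrable (𝓕 f)) :
    ∀ᵐ x, f x = 𝓕⁻ (𝓕 f) x := by
  have flip : ∀ (ψ h : ℝ → ℂ), Integrable ψ → Integrable h → ∫ x, 𝓕 ψ x • h x = ∫ x, ψ x • 𝓕 h x := by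
    intro ψ h hψ hh
    have := VectorFourier.integral_fourierIntegral_smul_eq_flip (μ := volume) (ν := volume) (L := innerₗ ℝ)
      (f := ψ) (g := h) continuous_fourierChar continuous_inner hψ hh
    rw [flip_innerₗ] at this
    exact this
  have hFn : Integrable (fun x => 𝓕 f (-x)) := hF.comp_neg
  have hcont : Continuous (𝓕⁻ (𝓕 f)) := by
    rw [fourierInv_eq_fourier_comp_neg]
    exact VectorFourier.fourierIntegral_continuous continuous_fourierChar continuous_inner hFn
  apply ae_eq_of_integral_contDiff_smul_eq hf.locallyIntegrable hcont.locallyIntegrable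
  intro g g_smooth g_cpt
  have hg₁ : HasCompactSupport (Complex.ofRealCLM ∘ g) := g_cpt.comp_left rfl
  have hg₂ : ContDiff ℝ (⊤ : ℕ∞) (Complex.ofRealCLM ∘ g) := by fun_prop
  let φ := hg₁.toSchwartzMap hg₂
  have hφ : ∀ x, φ x = (g x : ℂ) := fun x => rfl
  have hφi : Integrable φ := φ.integrable
  have hψi : Integrable (𝓕⁻ (φ : ℝ → ℂ)) := by
    rw [← SchwartzMap.fourierInv_coe]; exact (𝓕⁻ φ).integrable
  have hinv : 𝓕 (𝓕⁻ (φ : ℝ → ℂ)) = φ := by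
    rw [← SchwartzMap.fourierInv_coe, ← SchwartzMap.fourier_coe]; simp
  calc ∫ x, g x • f x = ∫ x, 𝓕 (𝓕⁻ (φ : ℝ → ℂ)) x • f x := by rw [hinv]; simp [hφ]
    _ = ∫ x, 𝓕⁻ (φ : ℝ → ℂ) x • 𝓕 f x := flip _ _ hψi hf
    _ = ∫ x, 𝓕 (φ : ℝ → ℂ) (-x) • 𝓕 f x := by simp only [fourierInv_eq_fourier_neg]
    _ = ∫ x, 𝓕 (φ : ℝ → ℂ) x • 𝓕 f (-x) := by rw [← integral_neg_eq_self]; simp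
    _ = ∫ x, φ x • 𝓕 (fun x => 𝓕 f (-x)) x := flip _ _ hφi hFn
    _ = _ := by rw [fourierInv_eq_fourier_comp_neg]; simp [hφ]

open FourierTransform in
lemma inversion_flt (f : ℝ → ℂ) (hf : Integrable f) (F : ℝ → ℂ)
    (hF : ∀ l : ℝ, F l = ∫ t : ℝ, f t * Complex.exp (-(Complex.I * l * t))) (hFi : Integrable F) :
    ∀ᵐ x : ℝ, f x = (2 * Real.pi : ℝ)⁻¹ * flt F x := by
  have hpi := Real.pi_pos
  have e : ∀ w, 𝓕 f w = F (w * (2 * Real.pi)) := by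
    intro w
    rw [Real.fourier_real_eq_integral_exp_smul, hF]
    congr 1; ext t; rw [smul_eq_mul, mul_comm]; congr 2; push_cast; ring
  have hi : Integrable (𝓕 f) := by
    rw [funext e]; exact hFi.comp_mul_right' (by positivity)
  filter_upwards [fourier_inversion_ae f hf hi] with x hx
  rw [hx, Real.fourierInv_eq', flt]
  have := Measure.integral_comp_mul_right (fun l : ℝ => F l * Complex.exp (Complex.I * x * l)) (2 * Real.pi)
  rw [abs_of_pos (by positivity), Complex.real_smul] at this
  rw [← this]
  congr 1; ext w; rw [e, smul_eq_mul, mul_comm]; congr 2; simp; ring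

theorem gelfand_shilov_theorem_R (f : ℝ → ℂ) (hf : Integrable f)
    (F : ℝ → ℂ)
    (hF : ∀ l : ℝ, F l = ∫ t : ℝ, f t * Complex.exp (-(Complex.I * l * t)))
    (p q α β : ℝ) (hp : 1 < p) (hq : 1 < q) (hpq : 1 / p + 1 / q = 1)
    (hα : 0 < α) (hβ : 0 < β) (hαβ : 1 ≤ α * β)
    (h1 : Integrable (fun x : ℝ => ‖f x‖ * Real.exp ((α * |x|) ^ p / p)))
    (h2 : Integrable (fun l : ℝ => ‖F l‖ * Real.exp ((β * |l|) ^ q / q))) :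
    f =ᵐ[volume] 0 := by
  have hc : p.HolderConjugate q := ⟨by simpa using hpq, by linarith, by linarith⟩
  have hFE : ∀ l : ℝ, F l = flt f (-l : ℝ) := by
    intro l; rw [hF, flt]; congr 1; ext t; congr 2; push_cast; ring
  have hfm := hf.aestronglyMeasurable
  have hFc : Continuous F := by
    rw [funext hFE]
    have := (flt_differentiable f hfm (int_exp f hfm hc hα h1)).continuous
    fun_prop
  have hFm : AEStronglyMeasurable F := hFc.aestronglyMeasurable
  have hFi : Integrable F := by
    have := int_exp F hFm hc.symm hβ h2 0
    simp only [zero_mul, Real.exp_zero, mul_one] at this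
    exact (integrable_norm_iff hFm).1 this
  have hinv := inversion_flt f hf F hF hFi
  have hz : ∀ z, flt F z = 0 := by
    rcases le_total p 2 with h | h
    · refine half F hFm hc.symm hp h hβ hα (by linarith) h2 ?_
      refine (h1.const_mul (2 * Real.pi)).congr ?_
      filter_upwards [hinv] with x hx
      have hpi := Real.pi_pos
      rw [hx, norm_mul, Complex.norm_real, Real.norm_of_nonneg (by positivity)]
      field_simp
    · have hq2 : q ≤ 2 := by
        have e1 : 1 / p ≤ 1 / 2 := by gcongr
        have e2 : 1 / 2 ≤ 1 / q := by linarith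
        exact (one_div_le_one_div (by norm_num) (by linarith)).1 e2
      have hz := half f hfm hc hq hq2 hα hβ hαβ h1 (by simpa [hFE] using h2.comp_neg)
      intro z
      have hF0 : ∀ l, F l = 0 := fun l => by rw [hFE, hz]
      simp [flt, hF0]
  filter_upwards [hinv] with x hx
  simp [hx, hz]
end

section
/- Let f ∈ L¹(ℝ), 1 < p < ∞, 1/p + 1/q = 1, α, β > 0 with (αp)^{1/p}(βq)^{1/q} > 1. Suppose |f(x)| ≤ C e^{-α|x|^p} for all x and |f̃(λ)| ≤ C e^{-β|λ|^q} for all λ. Then f = 0 almost everywhere. -/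
open MeasureTheory
open scoped FourierTransform ContDiff SchwartzMap

lemma morgan_fourier_inj (f : ℝ → ℂ) (hf : Integrable f)
    (h : ∀ l : ℝ, ∫ t : ℝ, f t * Complex.exp (-(Complex.I * l * t)) = 0) : f =ᵐ[volume] 0 := by
  have h0 : 𝓕 f = 0 := by
    ext w
    rw [Real.fourier_real_eq_integral_exp_smul, Pi.zero_apply, ← h (2 * Real.pi * w)]
    congr 1
    ext t
    rw [smul_eq_mul, mul_comm]
    congr 2
    push_cast
    ring
  apply ae_eq_zero_of_integral_contDiff_smul_eq_zero hf.locallyIntegrable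
  intro g g_smooth g_cpt
  have hg₁ : HasCompactSupport (Complex.ofRealCLM ∘ g) := g_cpt.comp_left rfl
  have hg₂ : ContDiff ℝ ∞ (Complex.ofRealCLM ∘ g) := by fun_prop
  set φ : 𝓢(ℝ, ℂ) := hg₁.toSchwartzMap hg₂ with hφ
  set ψ : 𝓢(ℝ, ℂ) := 𝓕⁻ φ with hψ
  have e : 𝓕 (ψ : ℝ → ℂ) = φ := by
    rw [← SchwartzMap.fourier_coe, hψ]
    simp
  have key := VectorFourier.integral_fourierIntegral_smul_eq_flip (L := innerₗ ℝ)
      Real.continuous_fourierChar continuous_inner hf (ψ.integrable (μ := volume))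
  have k1 : ∀ ξ, VectorFourier.fourierIntegral Real.fourierChar volume (innerₗ ℝ) f ξ = 0 := fun ξ => congrFun h0 ξ
  have k2 : ∀ x, VectorFourier.fourierIntegral Real.fourierChar volume (innerₗ ℝ).flip (ψ : ℝ → ℂ) x = g x := by
    intro x
    have := congrFun e x
    rw [flip_innerₗ]
    exact this
  simp only [k1, k2, zero_smul, integral_zero] at key
  rw [key]
  congr 1
  ext x
  simp [mul_comm]

lemma morgan_norm_aux (m ε : ℝ) (s : ℂ) :
    ‖Complex.exp (Complex.I * m * s - ε * (s * Complex.log s))‖ =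
      Real.exp (-(m * s.im) - ε * (s.re * Real.log ‖s‖ - s.im * s.arg)) := by
  rw [Complex.norm_exp]
  congr 1
  simp [Complex.log_re, Complex.log_im]

lemma morgan_cont_mul_log (s : ℂ) (hs : 0 ≤ s.re) :
    ContinuousAt (fun s : ℂ => s * Complex.log s) s := by
  by_cases h : s = 0
  · subst h
    rw [ContinuousAt, zero_mul, tendsto_zero_iff_norm_tendsto_zero]
    have h1 : Filter.Tendsto (fun s : ℂ => |‖s‖ * Real.log ‖s‖| + Real.pi * ‖s‖) (nhds 0) (nhds 0) := by
      have : Continuous (fun s : ℂ => |‖s‖ * Real.log ‖s‖| + Real.pi * ‖s‖) :=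
        (Real.continuous_mul_log.comp continuous_norm).abs.add (continuous_const.mul continuous_norm)
      simpa using this.tendsto 0
    refine squeeze_zero (fun _ => norm_nonneg _) (fun z => ?_) h1
    rw [norm_mul]
    have : ‖Complex.log z‖ ≤ |Real.log ‖z‖| + Real.pi := by
      refine (Complex.norm_le_abs_re_add_abs_im _).trans ?_
      rw [Complex.log_re, Complex.log_im]
      gcongr
      exact Complex.abs_arg_le_pi z
    calc _ ≤ ‖z‖ * (|Real.log ‖z‖| + Real.pi) := by gcongr
      _ = _ := by rw [abs_mul, abs_norm]; ring
  · have : s ∈ Complex.slitPlane := by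
      rw [Complex.mem_slitPlane_iff]
      rcases hs.lt_or_eq with h1 | h1
      · exact Or.inl h1
      · right; intro h2; exact h (Complex.ext h1.symm h2)
    exact continuousAt_id.mul (continuousAt_clog this)

lemma morgan_cont_cpow (r : ℝ) (hr : 0 < r) (s : ℂ) (hs : 0 ≤ s.re) :
    ContinuousAt (fun s : ℂ => s ^ (r : ℂ)) s := by
  by_cases h : s = 0
  · subst h
    exact (Complex.continuousAt_cpow_zero_of_re_pos (z := (r : ℂ)) (by simpa using hr)).comp
      (f := fun s : ℂ => (s, (r : ℂ))) (by fun_prop)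
  · have : s ∈ Complex.slitPlane := by
      rw [Complex.mem_slitPlane_iff]
      rcases hs.lt_or_eq with h1 | h1
      · exact Or.inl h1
      · right; intro h2; exact h (Complex.ext h1.symm h2)
    exact continuousAt_id.cpow continuousAt_const this

lemma morgan_ray (q : ℝ) (hq : 0 < q) (y : ℝ) (hy : 0 < y) :
    Complex.exp (Complex.I * (Real.pi / (2 * q) : ℝ)) * (((-y : ℝ) : ℂ) * Complex.I) ^ ((1 / q : ℝ) : ℂ)
      = ((y ^ (1 / q) : ℝ) : ℂ) := by
  have e : (((-y : ℝ) : ℂ) * Complex.I) = (y : ℂ) * (-Complex.I) := by push_cast; ring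
  have hne : (y : ℂ) * (-Complex.I) ≠ 0 := by simp [hy.ne']
  rw [e, Complex.cpow_def_of_ne_zero hne, Complex.log_ofReal_mul hy (by simp), Complex.log_neg_I,
    ← Complex.exp_add, Real.rpow_def_of_pos hy, Complex.ofReal_exp]
  congr 1
  have : (q : ℂ) ≠ 0 := by exact_mod_cast hq.ne'
  push_cast
  field_simp
  ring

theorem morgan_core (F : ℂ → ℂ) (hF : Differentiable ℂ F) (q β c C C' : ℝ) (hq : 0 < q)
    (hc : 0 < c) (hcβ : c < β)
    (hr : ∀ x : ℝ, 0 < x → ‖F x‖ ≤ C * Real.exp (-(β * x ^ q)))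
    (hb : ∀ z : ℂ, ‖F z‖ ≤ C' * Real.exp (c * ‖z‖ ^ q)) (x : ℝ) (hx : 0 < x) : F x = 0 := by
  set m : ℝ := (β + c) / 2 with hm
  set ε : ℝ := (β - c) / Real.pi with hε
  have hε0 : 0 < ε := div_pos (by linarith) Real.pi_pos
  have hεπ : ε * (Real.pi / 2) = (β - c) / 2 := by rw [hε]; field_simp
  have hC'0 : 0 ≤ C' := by
    have := (norm_nonneg _).trans (hb 0)
    exact nonneg_of_mul_nonneg_left this (Real.exp_pos _)
  have hq' : 0 < 1 / q := by positivity
  set Z : ℂ → ℂ := fun s => Complex.exp (Complex.I * (Real.pi / (2 * q) : ℝ)) * s ^ ((1 / q : ℝ) : ℂ) with hZ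
  have hZn : ∀ s, ‖Z s‖ ^ q = ‖s‖ := by
    intro s
    rw [hZ]
    simp only [norm_mul]
    rw [mul_comm Complex.I, Complex.norm_exp_ofReal_mul_I, one_mul, Complex.norm_cpow_real, ← Real.rpow_mul (norm_nonneg _)]
    rw [one_div_mul_cancel hq.ne', Real.rpow_one]
  set k : ℂ → ℂ := fun s => F (Z s) * Complex.exp (Complex.I * m * s - ε * (s * Complex.log s)) with hk
  have hkn : ∀ s, ‖k s‖ ≤ C' * Real.exp (c * ‖s‖ + (-(m * s.im) - ε * (s.re * Real.log ‖s‖ - s.im * s.arg))) := by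
    intro s
    rw [hk]
    simp only [norm_mul]
    rw [morgan_norm_aux, Real.exp_add, ← mul_assoc]
    have := hb (Z s)
    rw [hZn] at this
    gcongr
  have key : Set.EqOn k 0 {z : ℂ | 0 ≤ z.re} := by
    apply PhragmenLindelof.eq_zero_on_right_half_plane_of_superexponential_decay
    · constructor
      · intro s hs
        have hs' : s ∈ Complex.slitPlane := Or.inl hs
        refine DifferentiableAt.differentiableWithinAt ?_
        have h1 : DifferentiableAt ℂ Z s :=
          (differentiableAt_id.cpow_const hs').const_mul _
        have h2 : DifferentiableAt ℂ (fun s => Complex.log s) s := differentiableAt_id.clog hs'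
        have h3 : DifferentiableAt ℂ (fun s => F (Z s)) s := (hF (Z s)).comp s h1
        exact h3.mul (by fun_prop)
      · rw [Complex.closure_setOfPred_lt_re]
        intro s hs
        refine ContinuousAt.continuousWithinAt ?_
        have h1 : ContinuousAt Z s := continuousAt_const.mul (morgan_cont_cpow _ hq' s hs)
        have h3 : ContinuousAt (fun s => F (Z s)) s := ContinuousAt.comp (hF.continuous.continuousAt) h1
        have h2 := morgan_cont_mul_log s hs
        exact h3.mul (by fun_prop)
    · refine ⟨3 / 2, by norm_num, c + m + ε * (2 + Real.pi), ?_⟩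
      apply Asymptotics.IsBigO.of_bound C'
      have hlarge : ∀ᶠ s : ℂ in Bornology.cobounded ℂ, 1 ≤ ‖s‖ :=
        tendsto_norm_cobounded_atTop.eventually_ge_atTop 1
      filter_upwards [hlarge.filter_mono inf_le_left] with s hs
      refine (hkn s).trans ?_
      rw [Real.norm_of_nonneg (Real.exp_pos _).le]
      gcongr
      have hm0 : 0 < m := by rw [hm]; linarith
      have e1 : ‖s‖ ^ (3 / 2 : ℝ) = ‖s‖ * ‖s‖ ^ (1 / 2 : ℝ) := by
        rw [← Real.rpow_one_add' (norm_nonneg _) (by norm_num)]; norm_num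
      have e2 : 1 ≤ ‖s‖ ^ (1 / 2 : ℝ) := Real.one_le_rpow hs (by norm_num)
      have e3 : ‖s‖ ≤ ‖s‖ ^ (3 / 2 : ℝ) := by rw [e1]; nlinarith
      have e4 : Real.log ‖s‖ ≤ 2 * ‖s‖ ^ (1 / 2 : ℝ) := by
        have := Real.log_le_rpow_div (norm_nonneg s) (ε := 1 / 2) (by norm_num)
        linarith
      have e5 : |s.re * Real.log ‖s‖| ≤ 2 * ‖s‖ ^ (3 / 2 : ℝ) := by
        rw [abs_mul, abs_of_nonneg (Real.log_nonneg hs), e1]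
        calc _ ≤ ‖s‖ * (2 * ‖s‖ ^ (1 / 2 : ℝ)) :=
              mul_le_mul (Complex.abs_re_le_norm s) e4 (Real.log_nonneg hs) (norm_nonneg _)
          _ = _ := by ring
      have e6 : |s.im * s.arg| ≤ Real.pi * ‖s‖ ^ (3 / 2 : ℝ) := by
        rw [abs_mul, mul_comm]
        exact mul_le_mul (Complex.abs_arg_le_pi s) ((Complex.abs_im_le_norm s).trans e3) (abs_nonneg _) Real.pi_pos.le
      have e7 : -(m * s.im) ≤ m * ‖s‖ ^ (3 / 2 : ℝ) := by
        have := (neg_le_abs s.im).trans ((Complex.abs_im_le_norm s).trans e3)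
        nlinarith
      have e8 : -(ε * (s.re * Real.log ‖s‖ - s.im * s.arg)) ≤ ε * ((2 + Real.pi) * ‖s‖ ^ (3 / 2 : ℝ)) := by
        rw [← mul_neg]
        apply mul_le_mul_of_nonneg_left _ hε0.le
        have := neg_le_abs (s.re * Real.log ‖s‖)
        have := le_abs_self (s.im * s.arg)
        linarith
      nlinarith
    · intro n
      have hlim : Filter.Tendsto (fun x : ℝ => C' * Real.exp (-x)) Filter.atTop (nhds 0) := by
        simpa using Real.tendsto_exp_neg_atTop_nhds_zero.const_mul C'
      refine squeeze_zero' (Filter.Eventually.of_forall fun x => by positivity) ?_ hlim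
      filter_upwards [Filter.eventually_gt_atTop 0,
        Real.tendsto_log_atTop.eventually_ge_atTop ((n + c + 1) / ε)] with x hx hx2
      rw [div_le_iff₀ hε0] at hx2
      have := hkn x
      rw [Complex.norm_of_nonneg hx.le] at this
      simp only [Complex.ofReal_re, Complex.ofReal_im] at this
      calc Real.exp x ^ n * ‖k x‖ ≤ Real.exp x ^ n * _ := mul_le_mul_of_nonneg_left this (by positivity)
        _ = C' * Real.exp (n * x + (c * x - ε * (x * Real.log x))) := by
          rw [← Real.exp_nat_mul, mul_left_comm, ← Real.exp_add]; ring_nf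
        _ ≤ _ := by
          gcongr
          nlinarith
    · refine ⟨max C C', fun x => ?_⟩
      rcases lt_trichotomy x 0 with h | h | h
      · obtain ⟨y, rfl⟩ : ∃ y, x = -y := ⟨-x, by ring⟩
        have hy : 0 < y := by linarith
        rw [hk]
        simp only [norm_mul]
        rw [morgan_norm_aux, hZ]
        simp only
        rw [morgan_ray q hq y hy]
        have harg : ((((-y : ℝ)) : ℂ) * Complex.I).arg = -(Real.pi / 2) := by
          have e : (((-y : ℝ) : ℂ) * Complex.I) = (y : ℂ) * (-Complex.I) := by push_cast; ring
          rw [e, Complex.arg_real_mul _ hy, Complex.arg_neg_I]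
        rw [harg]
        have h1 := hr (y ^ (1 / q)) (by positivity)
        rw [← Real.rpow_mul hy.le, one_div_mul_cancel hq.ne', Real.rpow_one] at h1
        have h2 : (-(m * (((-y : ℝ) : ℂ) * Complex.I).im) - ε * ((((-y : ℝ) : ℂ) * Complex.I).re * Real.log ‖((-y : ℝ) : ℂ) * Complex.I‖ - (((-y : ℝ) : ℂ) * Complex.I).im * -(Real.pi / 2))) = β * y := by
          simp
          linear_combination y * hεπ + y * hm
        rw [h2]
        calc _ ≤ C * Real.exp (-(β * y)) * Real.exp (β * y) := by gcongr
          _ = C := by rw [mul_assoc, ← Real.exp_add]; simp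
          _ ≤ _ := le_max_left _ _
      · subst h
        refine (hkn _).trans ?_
        simp
      · refine (hkn _).trans ?_
        rw [Complex.arg_real_mul _ h, Complex.arg_I]
        refine le_trans ?_ (le_max_right _ _)
        have h2 : c * ‖(x : ℂ) * Complex.I‖ + (-(m * ((x : ℂ) * Complex.I).im) - ε * (((x : ℂ) * Complex.I).re * Real.log ‖(x : ℂ) * Complex.I‖ - ((x : ℂ) * Complex.I).im * (Real.pi / 2))) = 0 := by
          simp [abs_of_pos h]
          linear_combination x * hεπ - x * hm
        rw [h2]; simp
  have hy : 0 < x ^ q := by positivity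
  have := key (x := ((-(x ^ q) : ℝ) : ℂ) * Complex.I) (by simp)
  rw [hk] at this
  simp only [hZ] at this
  rw [morgan_ray q hq _ hy, ← Real.rpow_mul hx.le, mul_one_div_cancel hq.ne', Real.rpow_one] at this
  simpa using this

lemma morgan_integrable_exp (δ p : ℝ) (hδ : 0 < δ) (hp : 1 < p) :
    Integrable (fun t : ℝ => Real.exp (-(δ * |t| ^ p))) := by
  have h1 : Integrable (fun t : ℝ => Real.exp (-(δ * |t|))) := by
    rw [← integrableOn_univ, ← Set.Iic_union_Ioi (a := (0 : ℝ))]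
    apply IntegrableOn.union
    · refine (integrableOn_exp_mul_Iic hδ 0).congr_fun (fun t ht => ?_) measurableSet_Iic
      simp only
      rw [abs_of_nonpos ht]; ring_nf
    · refine (exp_neg_integrableOn_Ioi 0 hδ).congr_fun (fun t ht => ?_) measurableSet_Ioi
      simp only
      rw [abs_of_pos ht]; ring_nf
  refine (h1.const_mul (Real.exp δ)).mono' ?_ ?_
  · have : Continuous fun t : ℝ => |t| ^ p := continuous_abs.rpow_const (fun _ => Or.inr (by linarith))
    exact (by fun_prop : Continuous fun t : ℝ => Real.exp (-(δ * |t| ^ p))).aestronglyMeasurable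
  · refine Filter.Eventually.of_forall fun t => ?_
    rw [Real.norm_of_nonneg (Real.exp_pos _).le, ← Real.exp_add]
    apply Real.exp_le_exp.2
    have : |t| ≤ 1 + |t| ^ p := by
      rcases le_total |t| 1 with h | h
      · have := Real.rpow_nonneg (abs_nonneg t) p
        linarith
      · have := Real.rpow_le_rpow_of_exponent_le h hp.le
        rw [Real.rpow_one] at this
        linarith
    nlinarith

lemma morgan_extension (f : ℝ → ℂ) (hf : Integrable f) (p q α β C : ℝ) (hp : 1 < p) (hq : 1 < q)
    (hpq : 1 / p + 1 / q = 1) (hα : 0 < α) (hβ : 0 < β)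
    (hαβ : 1 < (α * p) ^ (1 / p) * (β * q) ^ (1 / q))
    (hfd : ∀ x : ℝ, ‖f x‖ ≤ C * Real.exp (-(α * |x| ^ p))) :
    Differentiable ℂ (fun z : ℂ => ∫ t : ℝ, f t * Complex.exp (-(Complex.I * z * t))) ∧
    ∃ c C', 0 < c ∧ c < β ∧ ∀ z : ℂ, ‖∫ t : ℝ, f t * Complex.exp (-(Complex.I * z * t))‖ ≤
      C' * Real.exp (c * ‖z‖ ^ q) := by
  have hp0 : 0 < p := by linarith
  have hq0 : 0 < q := by linarith
  have hC : 0 ≤ C := nonneg_of_mul_nonneg_left ((norm_nonneg _).trans (hfd 0)) (Real.exp_pos _)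
  have hconj : p.HolderConjugate q := Real.holderConjugate_iff.mpr ⟨hp, by simpa using hpq⟩
  set a0 := (α * p) ^ (1 / p) with ha0
  set b0 := (β * q) ^ (1 / q) with hb0
  have ha0p : 0 < a0 := by positivity
  have hb0p : 0 < b0 := by positivity
  have hlt : 1 / b0 < a0 := by rwa [div_lt_iff₀ hb0p]
  obtain ⟨a, ha1, ha2⟩ := exists_between hlt
  have ha : 0 < a := lt_trans (by positivity) ha1
  have hap : a ^ p / p < α := by
    rw [div_lt_iff₀ hp0]
    have := Real.rpow_lt_rpow ha.le ha2 hp0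
    rwa [ha0, ← Real.rpow_mul (by positivity), one_div_mul_cancel hp0.ne', Real.rpow_one] at this
  have haq : (1 / a) ^ q / q < β := by
    rw [div_lt_iff₀ hq0]
    have h1 : 1 / a < b0 := by
      rw [div_lt_iff₀ ha]; rwa [div_lt_iff₀ hb0p, mul_comm] at ha1
    have := Real.rpow_lt_rpow (by positivity) h1 hq0
    rwa [hb0, ← Real.rpow_mul (by positivity), one_div_mul_cancel hq0.ne', Real.rpow_one] at this
  set c := (1 / a) ^ q / q with hc
  set δ := α - a ^ p / p with hδ
  have hδ0 : 0 < δ := by rw [hδ]; linarith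
  have hE := morgan_integrable_exp δ p hδ0 hp
  have hbound : ∀ (R : ℝ), 0 ≤ R → ∀ t : ℝ, ‖f t‖ * Real.exp (R * |t|) ≤
      C * Real.exp (c * R ^ q) * Real.exp (-(δ * |t| ^ p)) := by
    intro R hR t
    have hy := Real.young_inequality_of_nonneg (a := a * |t|) (b := R / a) (by positivity) (by positivity) hconj
    have e1 : a * |t| * (R / a) = R * |t| := by field_simp
    rw [e1, Real.mul_rpow ha.le (abs_nonneg t), div_eq_mul_one_div R a, Real.mul_rpow hR (by positivity)] at hy
    calc _ ≤ C * Real.exp (-(α * |t| ^ p)) * Real.exp (R * |t|) := by gcongr; exact hfd t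
      _ = C * Real.exp (-(α * |t| ^ p) + R * |t|) := by rw [Real.exp_add]; ring
      _ ≤ C * Real.exp (c * R ^ q + -(δ * |t| ^ p)) := by
        refine mul_le_mul_of_nonneg_left (Real.exp_le_exp.2 ?_) hC
        rw [hc, hδ]
        have : (1 / a) ^ q / q * R ^ q = R ^ q * (1 / a) ^ q / q := by ring
        rw [this]
        have : a ^ p * |t| ^ p / p = a ^ p / p * |t| ^ p := by ring
        rw [this] at hy
        linarith
      _ = _ := by rw [Real.exp_add]; ring
  have hnexp : ∀ (z : ℂ) (t : ℝ), ‖Complex.exp (-(Complex.I * z * t))‖ ≤ Real.exp (‖z‖ * |t|) := by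
    intro z t
    refine (Complex.norm_exp_le_exp_norm _).trans ?_
    simp
  have hnb : ∀ (z : ℂ) (t : ℝ), ‖f t * Complex.exp (-(Complex.I * z * t))‖ ≤
      C * Real.exp (c * ‖z‖ ^ q) * Real.exp (-(δ * |t| ^ p)) := by
    intro z t
    refine le_trans ?_ (hbound ‖z‖ (norm_nonneg _) t)
    rw [norm_mul]
    gcongr
    exact hnexp z t
  have hmeas : ∀ z : ℂ, AEStronglyMeasurable (fun t : ℝ => f t * Complex.exp (-(Complex.I * z * t))) := by
    intro z
    refine hf.aestronglyMeasurable.mul (Continuous.aestronglyMeasurable ?_)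
    fun_prop
  refine ⟨?_, c, C * ∫ t : ℝ, Real.exp (-(δ * |t| ^ p)), by positivity, haq, ?_⟩
  · intro z
    refine (hasDerivAt_integral_of_dominated_loc_of_deriv_le (𝕜 := ℂ) (s := Metric.ball z 1)
      (F := fun z t => f t * Complex.exp (-(Complex.I * z * t)))
      (F' := fun z t => f t * (Complex.exp (-(Complex.I * z * t)) * (-(Complex.I * t))))
      (bound := fun t => C * Real.exp (c * (‖z‖ + 2) ^ q) * Real.exp (-(δ * |t| ^ p)))
      (Metric.ball_mem_nhds _ one_pos) (Filter.Eventually.of_forall hmeas) ?_ ?_ ?_ ?_ ?_).2.differentiableAt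
    · exact (hE.const_mul _).mono' (hmeas z) (Filter.Eventually.of_forall (hnb z))
    · refine hf.aestronglyMeasurable.mul (Continuous.aestronglyMeasurable ?_)
      fun_prop
    · refine Filter.Eventually.of_forall fun t w hw => ?_
      refine le_trans ?_ (hbound (‖z‖ + 2) (by positivity) t)
      rw [norm_mul, norm_mul]
      gcongr
      have hw' : ‖w‖ ≤ ‖z‖ + 1 := by
        have h1 : ‖w - z‖ < 1 := by simpa [dist_eq_norm] using hw
        have := norm_le_norm_add_norm_sub' w z
        linarith
      have e : (‖z‖ + 2) * |t| = (‖z‖ + 1) * |t| + |t| := by ring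
      rw [e, Real.exp_add]
      have h2 : ‖-(Complex.I * (t : ℂ))‖ ≤ Real.exp |t| := by
        simp
        have := Real.add_one_le_exp |t|
        linarith
      have h3 : ‖Complex.exp (-(Complex.I * w * t))‖ ≤ Real.exp ((‖z‖ + 1) * |t|) := by
        refine (hnexp w t).trans ?_
        gcongr
      exact mul_le_mul h3 h2 (norm_nonneg _) (Real.exp_pos _).le
    · exact hE.const_mul _
    · refine Filter.Eventually.of_forall fun t w hw => ?_
      have : HasDerivAt (fun w : ℂ => -(Complex.I * w * t)) (-(Complex.I * t)) w := by
        simpa using (((hasDerivAt_id w).const_mul Complex.I).mul_const (t : ℂ)).fun_neg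
      exact this.cexp.const_mul _
  · intro z
    refine (norm_integral_le_of_norm_le (hE.const_mul _) (Filter.Eventually.of_forall (hnb z))).trans ?_
    rw [integral_const_mul]
    apply le_of_eq; ring

theorem morgan_theorem_R (f : ℝ → ℂ) (hf : Integrable f)
    (F : ℝ → ℂ)
    (hF : ∀ l : ℝ, F l = ∫ t : ℝ, f t * Complex.exp (-(Complex.I * l * t)))
    (p q α β C : ℝ) (hp : 1 < p) (hq : 1 < q) (hpq : 1 / p + 1 / q = 1)
    (hα : 0 < α) (hβ : 0 < β)
    (hαβ : 1 < (α * p) ^ (1 / p) * (β * q) ^ (1 / q))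
    (hfd : ∀ x : ℝ, ‖f x‖ ≤ C * Real.exp (-(α * |x| ^ p)))
    (hFd : ∀ l : ℝ, ‖F l‖ ≤ C * Real.exp (-(β * |l| ^ q))) :
    f =ᵐ[volume] 0 := by
  obtain ⟨hd, c, C', hc, hcβ, hb⟩ := morgan_extension f hf p q α β C hp hq hpq hα hβ hαβ hfd
  set G : ℂ → ℂ := fun z : ℂ => ∫ t : ℝ, f t * Complex.exp (-(Complex.I * z * t)) with hG
  have hz : ∀ x : ℝ, 0 < x → G x = 0 := by
    refine morgan_core G hd q β c C C' (by linarith) hc hcβ (fun x hx => ?_) hb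
    have h1 := hFd x
    rwa [hF, abs_of_pos hx] at h1
  have hG0 : G = 0 := by
    refine AnalyticOnNhd.eq_of_frequently_eq (z₀ := 0) (𝕜 := ℂ)
      (fun z _ => hd.analyticAt z) (fun z _ => analyticAt_const) ?_
    have ht : Filter.Tendsto (fun x : ℝ => (x : ℂ)) (nhdsWithin 0 (Set.Ioi 0)) (nhdsWithin 0 {0}ᶜ) := by
      refine tendsto_nhdsWithin_iff.2 ⟨?_, ?_⟩
      · exact (Complex.continuous_ofReal.tendsto' 0 0 (by simp)).mono_left nhdsWithin_le_nhds
      · filter_upwards [self_mem_nhdsWithin] with x hx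
        simpa using (ne_of_gt hx)
    refine ht.frequently (Filter.Eventually.frequently ?_)
    filter_upwards [self_mem_nhdsWithin] with x hx using hz x hx
  exact morgan_fourier_inj f hf (fun l => congrFun hG0 l)
end
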